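/- arXiv:2309.15282 — 3 statements merged into one kernel-verified Lean document; each statement's English description precedes it below -/
import Mathlib

section
/- Let d ≥ 1. There exists a constant C > 0, depending only on d, such that for every λ > 0 and every χ ∈ L¹(ℝ^d), the operator with symbol b(x,ξ) = χ((x+ξ)/λ) · 1_{|x| > |ξ|} satisfies ‖Op(b) f‖_{L²(ℝ^d)} ≤ C λ^d ‖χ‖_{L¹(ℝ^d)} ‖f‖_{L²(ℝ^d)} for every Schwartz function f on ℝ^d. -/
open MeasureTheory Filter Topology
open scoped RealInnerProductSpace ENNReal

noncomputable section

abbrev Euc (d : ℕ) := EuclideanSpace ℝ (Fin d)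

/-- Fourier transform `f̂(ξ) = ∫ e^{-i x·ξ} f(x) dx`. -/
def FT {d : ℕ} (f : Euc d → ℂ) (ξ : Euc d) : ℂ :=
  ∫ x : Euc d, Complex.exp (-(Complex.I * ((⟪x, ξ⟫ : ℝ) : ℂ))) * f x

/-- The pseudo-differential operator `Op(a)` on a Schwartz function:
`Op(a)f(x) = (2π)^{-d} ∫ e^{i x·ξ} a(x,ξ) f̂(ξ) dξ`. -/
def OpS {d : ℕ} (a : Euc d → Euc d → ℂ) (f : Euc d → ℂ) (x : Euc d) : ℂ :=
  (((2 * Real.pi) ^ d : ℝ) : ℂ)⁻¹ *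
    ∫ ξ : Euc d, Complex.exp (Complex.I * ((⟪x, ξ⟫ : ℝ) : ℂ)) * a x ξ * FT f ξ

lemma aux_scale {d : ℕ} (h : Euc d → ℝ≥0∞) (hm : Measurable h) (lam : ℝ) (hl : 0 < lam) :
    ∫⁻ x, h (lam⁻¹ • x) = ENNReal.ofReal (lam ^ d) * ∫⁻ x, h x := by
  have h1 := Measure.map_addHaar_smul (volume : Measure (Euc d)) (r := lam⁻¹) (by positivity)
  have h2 : ∫⁻ x, h (lam⁻¹ • x) = ∫⁻ y, h y ∂(Measure.map (lam⁻¹ • ·) (volume : Measure (Euc d))) := by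
    rw [lintegral_map hm (measurable_const_smul _)]
  rw [h2, h1, lintegral_smul_measure]
  have h3 : |((lam⁻¹) ^ d)⁻¹| = lam ^ d := by
    rw [inv_pow, inv_inv, abs_of_pos (by positivity)]
  simp only [finrank_euclideanSpace, Fintype.card_fin, h3, smul_eq_mul]

lemma aux_FT {d : ℕ} (f : SchwartzMap (Euc d) ℂ) (ξ : Euc d) :
    FT f ξ = (FourierTransform.fourier f : SchwartzMap (Euc d) ℂ) ((2 * Real.pi)⁻¹ • ξ) := by
  rw [SchwartzMap.fourier_coe, Real.fourier_eq']
  unfold FT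
  congr 1
  ext x
  rw [smul_eq_mul, inner_smul_right]
  congr 2
  have : (Real.pi : ℂ) ≠ 0 := by exact_mod_cast Real.pi_ne_zero
  push_cast
  field_simp

lemma aux_sq {d : ℕ} (f : SchwartzMap (Euc d) ℂ) :
    ∫⁻ x, ‖f x‖ₑ ^ 2 = ENNReal.ofReal (∫ x, ‖f x‖ ^ 2) := by
  have hi : Integrable (fun x => ‖f x‖ ^ 2) :=
    (memLp_two_iff_integrable_sq_norm f.continuous.aestronglyMeasurable).1 (f.memLp 2)
  rw [ofReal_integral_eq_lintegral_ofReal hi (Eventually.of_forall fun x => by positivity)]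
  congr 1
  ext x
  rw [ENNReal.ofReal_pow (norm_nonneg _), ofReal_norm]

lemma aux_planch {d : ℕ} (f : SchwartzMap (Euc d) ℂ) :
    ∫⁻ ξ, ‖FT f ξ‖ₑ ^ 2 = ENNReal.ofReal ((2 * Real.pi) ^ d) * ∫⁻ x, ‖f x‖ₑ ^ 2 := by
  simp_rw [aux_FT]
  rw [aux_scale (fun ξ => ‖(FourierTransform.fourier f : SchwartzMap (Euc d) ℂ) ξ‖ₑ ^ 2)
    (by have := (FourierTransform.fourier f : SchwartzMap (Euc d) ℂ).continuous.measurable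
        fun_prop) _ (by positivity), aux_sq, aux_sq]
  congr 2
  exact SchwartzMap.integral_norm_sq_fourier f

lemma aux_cs {α : Type*} [MeasurableSpace α] (μ : Measure α) (K G : α → ℝ≥0∞)
    (hK : Measurable K) (hG : Measurable G) :
    (∫⁻ a, K a * G a ∂μ) ^ 2 ≤ (∫⁻ a, K a ∂μ) * ∫⁻ a, K a * G a ^ 2 ∂μ := by
  have h := ENNReal.lintegral_mul_norm_pow_le (μ := μ) (f := K) (g := fun a => K a * G a ^ 2)
    hK.aemeasurable (by fun_prop) (p := 1/2) (q := 1/2) (by norm_num) (by norm_num) (by norm_num)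
  have e : ∀ y : ℝ≥0∞, (y ^ (1/2 : ℝ)) ^ 2 = y := fun y => by
    rw [← ENNReal.rpow_two, ← ENNReal.rpow_mul]; norm_num
  have e' : ∀ y : ℝ≥0∞, (y ^ 2) ^ (1/2 : ℝ) = y := fun y => by
    rw [← ENNReal.rpow_two, ← ENNReal.rpow_mul]; norm_num
  have e2 : ∀ a, K a ^ (1/2 : ℝ) * (K a * G a ^ 2) ^ (1/2 : ℝ) = K a * G a := fun a => by
    rw [ENNReal.mul_rpow_of_nonneg _ _ (by norm_num), e', ← mul_assoc, ← sq, e]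
  simp_rw [e2] at h
  calc _ ≤ _ := pow_le_pow_left' h 2
    _ = _ := by rw [mul_pow, e, e]

lemma aux_eLp {d : ℕ} (g : Euc d → ℂ) :
    eLpNorm g 2 volume = (∫⁻ x, ‖g x‖ₑ ^ 2) ^ (1/2 : ℝ) := by
  rw [eLpNorm_eq_lintegral_rpow_enorm_toReal two_ne_zero ENNReal.ofNat_ne_top]
  simp

lemma aux_meas {d : ℕ} (f : SchwartzMap (Euc d) ℂ) : Measurable (FT f) := by
  have h : FT f = fun ξ => (FourierTransform.fourier f : SchwartzMap (Euc d) ℂ) ((2 * Real.pi)⁻¹ • ξ) :=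
    funext (aux_FT f)
  rw [h]
  exact ((FourierTransform.fourier f : SchwartzMap (Euc d) ℂ).continuous.comp
    (continuous_const_smul _)).measurable

lemma aux_schur {d : ℕ} (k : Euc d → ℝ≥0∞) (hk : Measurable k) (G : Euc d → ℝ≥0∞)
    (hG : Measurable G) (lam : ℝ) (hl : 0 < lam) :
    ∫⁻ x, (∫⁻ ξ, k (lam⁻¹ • (x + ξ)) * G ξ) ^ 2 ≤
      (ENNReal.ofReal (lam ^ d) * ∫⁻ x, k x) ^ 2 * ∫⁻ ξ, G ξ ^ 2 := by
  set M := ENNReal.ofReal (lam ^ d) * ∫⁻ x, k x with hM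
  have hks : ∀ ξ : Euc d, ∫⁻ x, k (lam⁻¹ • (x + ξ)) = M := fun ξ => by
    rw [lintegral_add_right_eq_self (fun x => k (lam⁻¹ • x)) ξ, aux_scale k hk lam hl]
  have hks' : ∀ x : Euc d, ∫⁻ ξ, k (lam⁻¹ • (x + ξ)) = M := fun x => by
    rw [← hks x]; simp_rw [add_comm x]
  calc _ ≤ ∫⁻ x, M * ∫⁻ ξ, k (lam⁻¹ • (x + ξ)) * G ξ ^ 2 := by
        refine lintegral_mono fun x => ?_
        refine (aux_cs volume (fun ξ => k (lam⁻¹ • (x + ξ))) G (by fun_prop) hG).trans ?_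
        rw [hks' x]
    _ = M * ∫⁻ x, ∫⁻ ξ, k (lam⁻¹ • (x + ξ)) * G ξ ^ 2 := by
        rw [lintegral_const_mul]
        exact Measurable.lintegral_prod_right' (f := fun p : Euc d × Euc d =>
          k (lam⁻¹ • (p.1 + p.2)) * G p.2 ^ 2) (by fun_prop)
    _ = M * ∫⁻ ξ, M * G ξ ^ 2 := by
        rw [lintegral_lintegral_swap (by
          have : Measurable (fun p : Euc d × Euc d =>
            k (lam⁻¹ • (p.1 + p.2)) * G p.2 ^ 2) := by fun_prop
          exact this.aemeasurable)]
        congr 2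
        ext ξ
        rw [lintegral_mul_const _ (by fun_prop), hks ξ]
    _ = _ := by rw [lintegral_const_mul _ (by fun_prop)]; ring

/-- Proposition C.2: uniform Schur-type bound: for every `λ > 0` and every
integrable `χ`, the operator with symbol `b(x,ξ) = χ((x+ξ)/λ) 1_{|x|>|ξ|}` is bounded on
`L²` with norm at most `C λ^d ‖χ‖_{L¹}`. -/
theorem statement17 (d : ℕ) (hd : 1 ≤ d) :
    ∃ C : ℝ, 0 < C ∧
      ∀ lam : ℝ, 0 < lam → ∀ χ : Euc d → ℂ, Integrable χ (volume : Measure (Euc d)) →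
        ∀ f : SchwartzMap (Euc d) ℂ,
          eLpNorm
            (OpS (fun x ξ =>
              χ (lam⁻¹ • (x + ξ)) * (if ‖ξ‖ < ‖x‖ then (1:ℂ) else 0)) ⇑f) 2
            (volume : Measure (Euc d))
          ≤ ENNReal.ofReal (C * lam ^ d * ∫ x : Euc d, ‖χ x‖) *
              eLpNorm (⇑f) 2 (volume : Measure (Euc d)) := by
  refine ⟨1, one_pos, fun lam hl χ hχ f => ?_⟩
  obtain ⟨k, hkm, hke⟩ : ∃ k : Euc d → ℝ≥0∞, Measurable k ∧ (fun x => ‖χ x‖ₑ) =ᵐ[volume] k :=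
    hχ.1.enorm
  have hkint : ∫⁻ x, k x = ENNReal.ofReal (∫ x, ‖χ x‖) := by
    rw [← lintegral_congr_ae hke, ofReal_integral_norm_eq_lintegral_enorm hχ]
  set A : ℝ := (2 * Real.pi) ^ d with hA
  have hA1 : 1 ≤ A := one_le_pow₀ (by nlinarith [Real.pi_gt_three])
  have hpt : ∀ x, ‖OpS (fun x ξ =>
      χ (lam⁻¹ • (x + ξ)) * (if ‖ξ‖ < ‖x‖ then (1:ℂ) else 0)) f x‖ₑ ≤
      ENNReal.ofReal A⁻¹ * ∫⁻ ξ, k (lam⁻¹ • (x + ξ)) * ‖FT f ξ‖ₑ := by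
    intro x
    unfold OpS
    rw [enorm_mul]
    have hc : ‖((A : ℝ) : ℂ)⁻¹‖ₑ = ENNReal.ofReal A⁻¹ := by
      rw [← ofReal_norm, norm_inv, Complex.norm_real, Real.norm_of_nonneg (by positivity)]
    rw [hc]
    gcongr
    refine (enorm_integral_le_lintegral_enorm _).trans ?_
    have hq : Measure.QuasiMeasurePreserving (fun ξ : Euc d => lam⁻¹ • (x + ξ)) volume volume := by
      refine Measure.QuasiMeasurePreserving.comp (g := fun y : Euc d => lam⁻¹ • y)
        (μb := volume) ⟨measurable_const_smul _, ?_⟩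
        (measurePreserving_add_left volume x).quasiMeasurePreserving
      rw [Measure.map_addHaar_smul _ (by positivity)]
      exact Measure.smul_absolutelyContinuous
    refine lintegral_mono_ae ?_
    filter_upwards [hq.ae hke] with ξ hξ
    rw [enorm_mul, enorm_mul, enorm_mul, ← hξ]
    have h1 : ‖Complex.exp (Complex.I * ((⟪x, ξ⟫ : ℝ) : ℂ))‖ₑ = 1 := by
      rw [← ofReal_norm, mul_comm, Complex.norm_exp_ofReal_mul_I, ENNReal.ofReal_one]
    rw [h1, one_mul]
    gcongr
    split_ifs <;> simp
  have hGm : Measurable (fun ξ => ‖FT f ξ‖ₑ) := (aux_meas f).enorm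
  rw [aux_eLp, aux_eLp]
  have hr : ENNReal.ofReal (1 * lam ^ d * ∫ x, ‖χ x‖) = ENNReal.ofReal (lam ^ d) * ∫⁻ x, k x := by
    rw [hkint, one_mul, ENNReal.ofReal_mul (by positivity)]
  rw [hr]
  set M := ENNReal.ofReal (lam ^ d) * ∫⁻ x, k x with hM
  have hM2 : M = (M ^ 2) ^ (1/2 : ℝ) := by
    rw [← ENNReal.rpow_two, ← ENNReal.rpow_mul]; norm_num
  rw [hM2, ← ENNReal.mul_rpow_of_nonneg _ _ (by norm_num)]
  refine ENNReal.rpow_le_rpow ?_ (by norm_num)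
  calc _ ≤ ∫⁻ x, (ENNReal.ofReal A⁻¹ * ∫⁻ ξ, k (lam⁻¹ • (x + ξ)) * ‖FT f ξ‖ₑ) ^ 2 :=
        lintegral_mono fun x => pow_le_pow_left' (hpt x) 2
    _ = ENNReal.ofReal A⁻¹ ^ 2 * ∫⁻ x, (∫⁻ ξ, k (lam⁻¹ • (x + ξ)) * ‖FT f ξ‖ₑ) ^ 2 := by
        simp_rw [mul_pow]
        rw [lintegral_const_mul' _ _ (by simp)]
    _ ≤ ENNReal.ofReal A⁻¹ ^ 2 * (M ^ 2 * (ENNReal.ofReal A * ∫⁻ x, ‖f x‖ₑ ^ 2)) := by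
        gcongr
        refine (aux_schur k hkm _ hGm lam hl).trans ?_
        rw [aux_planch]
    _ = (ENNReal.ofReal A⁻¹ ^ 2 * ENNReal.ofReal A) * (M ^ 2 * ∫⁻ x, ‖f x‖ₑ ^ 2) := by ring
    _ ≤ 1 * (M ^ 2 * ∫⁻ x, ‖f x‖ₑ ^ 2) := by
        gcongr
        rw [← ENNReal.ofReal_pow (by positivity), ← ENNReal.ofReal_mul (by positivity)]
        rw [ENNReal.ofReal_le_one]
        have : A⁻¹ ^ 2 * A = A⁻¹ := by field_simp
        rw [this]
        exact inv_le_one_of_one_le₀ hA1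
    _ = _ := one_mul _
end
end

section
/- Let d ≥ 1, let w₀ ∈ H¹(ℝ^d) and w₁ ∈ L²(ℝ^d) be real-valued, and let w be the solution of the Klein–Gordon equation ∂_t²w − Δw + w = 0 with w(0) = w₀ and ∂_t w(0) = w₁. Then for all r₀, r₁ with 0 ≤ r₀ ≤ r₁ ≤ +∞, lim_{t→±∞} ∫_{{x ∈ ℝ^d : r₀ < |x|/|t| < r₁}} (|∂_t w(t,x)|² + |∇w(t,x)|² + |w(t,x)|²) dx = (2π)^{−d} ∫_{{ξ ∈ ℝ^d : r₀ < |ξ|/⟨ξ⟩ < r₁}} (⟨ξ⟩² |ŵ₀(ξ)|² + |ŵ₁(ξ)|²) dξ, where ⟨ξ⟩ = √(1+|ξ|²). In particular, taking r₀ = 1 and r₁ = +∞, the energy outside the light cone tends to zero: lim_{t→±∞} ∫_{|x| > |t|} (|∂_t w|² + |∇w|² + |w|²) dx = 0. -/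
open MeasureTheory Filter Topology
open scoped RealInnerProductSpace ENNReal

noncomputable section

/-- `v` is the (distributional) Fourier transform of `u`. -/
def IsFourierTransformOf {d : ℕ} (u v : Euc d → ℂ) : Prop :=
  ∀ g : SchwartzMap (Euc d) ℂ, ∫ ξ : Euc d, v ξ * g ξ = ∫ x : Euc d, u x * FT (⇑g) x

/-- The japanese bracket `⟨ξ⟩ = √(1+|ξ|²)`. -/
def jap {d : ℕ} (ξ : Euc d) : ℝ := Real.sqrt (1 + ‖ξ‖ ^ 2)

/-- Fourier transform of the Klein–Gordon solution `w(t)`: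
`ŵ(t,ξ) = cos(t⟨ξ⟩) ŵ₀(ξ) + (sin(t⟨ξ⟩)/⟨ξ⟩) ŵ₁(ξ)`. -/
def vW {d : ℕ} (v₀ v₁ : Euc d → ℂ) (t : ℝ) (ξ : Euc d) : ℂ :=
  ((Real.cos (t * jap ξ) : ℝ) : ℂ) * v₀ ξ + ((Real.sin (t * jap ξ) / jap ξ : ℝ) : ℂ) * v₁ ξ

/-- Fourier transform of `∂_t w(t)`. -/
def vDt {d : ℕ} (v₀ v₁ : Euc d → ℂ) (t : ℝ) (ξ : Euc d) : ℂ :=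
  -(((jap ξ * Real.sin (t * jap ξ) : ℝ) : ℂ)) * v₀ ξ + ((Real.cos (t * jap ξ) : ℝ) : ℂ) * v₁ ξ

/-- The local Klein–Gordon energy of the solution at time `t` over the annulus
`{r₀ < |x|/|t| < r₁}` (with `r₀, r₁ ∈ [0,∞]`). -/
def localEnergy {d : ℕ} (wfun dtw : ℝ → Euc d → ℂ) (djw : ℝ → Fin d → Euc d → ℂ)
    (r₀ r₁ : ℝ≥0∞) (t : ℝ) : ℝ :=
  ∫ x in {x : Euc d | r₀ < ENNReal.ofReal (‖x‖ / |t|) ∧ ENNReal.ofReal (‖x‖ / |t|) < r₁},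
    (‖dtw t x‖ ^ 2 + (∑ j : Fin d, ‖djw t j x‖ ^ 2) + ‖wfun t x‖ ^ 2)


theorem levy_finite {d : ℕ} (μ : ℕ → Measure (Euc d)) (ν : Measure (Euc d))
    [∀ n, IsFiniteMeasure (μ n)] [IsFiniteMeasure ν]
    (h : ∀ a : Euc d, Tendsto (fun n => charFun (μ n) a) atTop (𝓝 (charFun ν a)))
    (S : Set (Euc d)) (hS : ν (frontier S) = 0) :
    Tendsto (fun n => (μ n).real S) atTop (𝓝 (ν.real S)) := by
  have hmass : Tendsto (fun n => (μ n).real Set.univ) atTop (𝓝 (ν.real Set.univ)) := by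
    have := h 0
    simp only [charFun_zero] at this
    exact (Complex.continuous_re.tendsto _).comp this
  by_cases hν : ν = 0
  · subst hν
    simp only [measureReal_zero, Pi.zero_apply] at hmass ⊢
    exact squeeze_zero (fun n => measureReal_nonneg)
      (fun n => measureReal_mono (Set.subset_univ S)) hmass
  · let M : ℕ → FiniteMeasure (Euc d) := fun n => ⟨μ n, inferInstance⟩
    let N : FiniteMeasure (Euc d) := ⟨ν, inferInstance⟩
    have hN : N ≠ 0 := fun h0 => hν (congrArg Subtype.val h0)
    have hpos : 0 < ν.real Set.univ := by
      rw [measureReal_def]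
      exact ENNReal.toReal_pos (by simpa using hν) (measure_ne_top _ _)
    have hev : ∀ᶠ n in atTop, M n ≠ 0 := by
      filter_upwards [hmass.eventually (lt_mem_nhds hpos)] with n hn h0
      have : μ n = 0 := congrArg Subtype.val h0
      simp [this] at hn
    have hchar : ∀ (K : FiniteMeasure (Euc d)), K ≠ 0 → ∀ a,
        charFun (K.normalize : Measure (Euc d)) a
          = (((K : Measure (Euc d)).real Set.univ)⁻¹ : ℝ) * charFun (K : Measure (Euc d)) a := by
      intro K hK a
      rw [FiniteMeasure.toMeasure_normalize_eq_of_nonzero _ hK, charFun_apply, charFun_apply]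
      have : (K.mass⁻¹ • (K : Measure (Euc d)))
        = ((K.mass⁻¹ : NNReal) : ℝ≥0∞) • (K : Measure (Euc d)) := rfl
      rw [this, integral_smul_measure]
      rw [Complex.real_smul]
      rfl
    have hw : Tendsto (fun n => (M n).normalize) atTop (𝓝 N.normalize) := by
      apply ProbabilityMeasure.tendsto_of_tendsto_charFun
      intro a
      rw [hchar N hN a]
      have : Tendsto (fun n => ((((μ n).real Set.univ)⁻¹ : ℝ) : ℂ) * charFun (μ n) a) atTop
          (𝓝 ((((ν.real Set.univ)⁻¹ : ℝ) : ℂ) * charFun ν a)) := by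
        refine Tendsto.mul ?_ (h a)
        exact (Complex.continuous_ofReal.tendsto _).comp (hmass.inv₀ hpos.ne')
      refine this.congr' ?_
      filter_upwards [hev] with n hn
      rw [hchar (M n) hn a]; rfl
    have hfr : N.normalize (frontier S) = 0 := by
      rw [FiniteMeasure.normalize_eq_of_nonzero _ hN]
      have : N (frontier S) = 0 := by
        simp [N, hS]
      simp [this]
    have h1 := ProbabilityMeasure.tendsto_measure_of_null_frontier_of_tendsto hw hfr
    have h2 : Tendsto (fun n => (M n).mass) atTop (𝓝 N.mass) := by
      rw [← NNReal.tendsto_coe]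
      exact hmass
    have h3 := h2.mul h1
    simp only [← FiniteMeasure.self_eq_mass_mul_normalize] at h3
    rw [← NNReal.tendsto_coe] at h3
    exact h3

/-- modulation -/
theorem IsFT_mod {d : ℕ} {u v : Euc d → ℂ} (h : IsFourierTransformOf u v) (b : Euc d) :
    IsFourierTransformOf (fun x => Complex.exp (((⟪x, b⟫ : ℝ) : ℂ) * Complex.I) * u x)
      (fun ξ => v (ξ - b)) := by
  intro g
  have h1 := h (g.compSubConstCLM ℂ (-b))
  have h2 : ∫ ξ, v (ξ - b) * g ξ = ∫ ξ, v ξ * g (ξ + b) := by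
    rw [← integral_add_right_eq_self _ b]
    simp
  rw [h2]
  simp only [SchwartzMap.compSubConstCLM_apply, sub_neg_eq_add] at h1
  rw [h1]
  congr 1
  ext x
  have : FT (⇑(g.compSubConstCLM ℂ (-b))) x
      = Complex.exp (((⟪x, b⟫ : ℝ) : ℂ) * Complex.I) * FT g x := by
    unfold FT
    rw [← integral_const_mul, ← integral_add_right_eq_self _ (-b)]
    congr 1
    ext y
    simp only [SchwartzMap.compSubConstCLM_apply, sub_neg_eq_add, neg_add_cancel_right]
    rw [← mul_assoc, ← Complex.exp_add]
    congr 2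
    rw [inner_add_left, inner_neg_left, real_inner_comm x b]
    push_cast
    ring
  rw [this]
  ring

theorem FT_scale {d : ℕ} (g : SchwartzMap (Euc d) ℂ) (x : Euc d) :
    FT (fun y => g ((2 * Real.pi)⁻¹ • y)) x
      = (((2 * Real.pi) ^ d : ℝ) : ℂ) * (FourierTransform.fourier g : SchwartzMap (Euc d) ℂ) x := by
  rw [SchwartzMap.fourier_coe, Real.fourier_eq]
  unfold FT
  have := Measure.integral_comp_smul (volume : Measure (Euc d))
    (fun y => Complex.exp (-(Complex.I * ((⟪y, x⟫ : ℝ) : ℂ))) * g ((2 * Real.pi)⁻¹ • y)) (2 * Real.pi)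
  have hp : (0:ℝ) < (2 * Real.pi) ^ d := by positivity
  have hq : (2 * Real.pi) ≠ 0 := by positivity
  rw [finrank_euclideanSpace_fin, abs_of_pos (by positivity), eq_inv_smul_iff₀ hp.ne'] at this
  rw [← this, Complex.real_smul]
  congr 2
  ext y
  rw [smul_smul, inv_mul_cancel₀ hq, one_smul, Circle.smul_def, Real.fourierChar_apply, smul_eq_mul]
  congr 2
  rw [real_inner_smul_left]
  push_cast
  ring

theorem qmp_smul {d : ℕ} : Measure.QuasiMeasurePreserving (fun ξ : Euc d => (2 * Real.pi) • ξ)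
    volume volume := by
  have hq : (2 * Real.pi) ≠ 0 := by positivity
  refine ⟨by fun_prop, ?_⟩
  rw [Measure.map_addHaar_smul _ hq]
  exact Measure.smul_absolutelyContinuous

theorem memLp_scale {d : ℕ} {v : Euc d → ℂ} (hv : MemLp v 2 volume) :
    MemLp (fun ξ => v ((2 * Real.pi) • ξ)) 2 volume := by
  have hq : (2 * Real.pi) ≠ 0 := by positivity
  have hm : AEStronglyMeasurable (fun ξ => v ((2 * Real.pi) • ξ)) volume :=
    hv.1.comp_quasiMeasurePreserving qmp_smul
  rw [memLp_two_iff_integrable_sq_norm hm]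
  have := (memLp_two_iff_integrable_sq_norm hv.1).1 hv
  exact this.comp_smul hq

theorem FT_unique {d : ℕ} {u v : Euc d → ℂ} (hu : MemLp u 2 volume) (hv : MemLp v 2 volume)
    (h : IsFourierTransformOf u v) :
    (memLp_scale hv).toLp _ =
      (FourierTransform.fourier (hu.toLp u) : Lp (α := Euc d) ℂ 2) := by
  have hq : (2 * Real.pi) ≠ 0 := by positivity
  have hp : (0:ℝ) < (2 * Real.pi) ^ d := by positivity
  have hinj := LinearMap.ker_eq_bot.1
    (Lp.ker_toTemperedDistributionCLM_eq_bot (E := Euc d) (F := ℂ) (μ := volume) (p := 2))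
  apply hinj
  change Lp.toTemperedDistribution _ = Lp.toTemperedDistribution _
  rw [← Lp.fourier_toTemperedDistribution_eq]
  ext g
  rw [TemperedDistribution.fourier_apply, Lp.toTemperedDistribution_apply,
    Lp.toTemperedDistribution_apply]
  let gs : SchwartzMap (Euc d) ℂ := SchwartzMap.compCLMOfContinuousLinearEquiv ℂ
    (ContinuousLinearEquiv.smulLeft (R₁ := ℝ) (M₁ := Euc d) (Units.mk0 ((2 * Real.pi)⁻¹) (inv_ne_zero hq))) g
  have hgs : ∀ y, gs y = g ((2 * Real.pi)⁻¹ • y) := fun y => rfl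
  have h1 := h gs
  have hgs' : (⇑gs) = fun y => g ((2 * Real.pi)⁻¹ • y) := funext hgs
  rw [hgs'] at h1
  simp only [FT_scale] at h1
  have e1 : ∫ x, g x • ((memLp_scale hv).toLp _ : Lp (α := Euc d) ℂ 2) x
      = ∫ ξ, v ((2 * Real.pi) • ξ) * g ξ := by
    apply integral_congr_ae
    filter_upwards [(memLp_scale hv).coeFn_toLp] with x hx
    rw [hx, smul_eq_mul, mul_comm]
  have e2 : ∫ x, (FourierTransform.fourier g : SchwartzMap (Euc d) ℂ) x • (hu.toLp u : Lp (α := Euc d) ℂ 2) x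
      = ∫ x, u x * (FourierTransform.fourier g : SchwartzMap (Euc d) ℂ) x := by
    apply integral_congr_ae
    filter_upwards [hu.coeFn_toLp] with x hx
    rw [hx, smul_eq_mul, mul_comm]
  rw [e1, e2]
  have e3 := Measure.integral_comp_smul (volume : Measure (Euc d))
    (fun ξ => v ξ * g ((2 * Real.pi)⁻¹ • ξ)) (2 * Real.pi)
  simp only [smul_smul, inv_mul_cancel₀ hq, one_smul] at e3
  rw [e3, h1, finrank_euclideanSpace_fin, abs_of_pos (by positivity), Complex.real_smul]
  have : ∀ x, u x * ((((2 * Real.pi) ^ d : ℝ) : ℂ) * (FourierTransform.fourier g : SchwartzMap (Euc d) ℂ) x)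
     = (((2 * Real.pi) ^ d : ℝ) : ℂ) * (u x * (FourierTransform.fourier g : SchwartzMap (Euc d) ℂ) x) := by
    intro x; ring
  simp only [this]
  rw [integral_const_mul, ← mul_assoc, ← Complex.ofReal_mul, inv_mul_cancel₀ hp.ne']
  simp

theorem plancherel {d : ℕ} {u v u' v' : Euc d → ℂ} (hu : MemLp u 2 volume) (hv : MemLp v 2 volume)
    (h : IsFourierTransformOf u v) (hu' : MemLp u' 2 volume) (hv' : MemLp v' 2 volume)
    (h' : IsFourierTransformOf u' v') :
    ∫ x, u' x * (starRingEnd ℂ) (u x)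
      = ((((2 * Real.pi) ^ d : ℝ))⁻¹ : ℝ) * ∫ ξ, v' ξ * (starRingEnd ℂ) (v ξ) := by
  have key := Lp.inner_fourier_eq (hu.toLp u : Lp (α := Euc d) ℂ 2) (hu'.toLp u')
  rw [← FT_unique hu hv h, ← FT_unique hu' hv' h'] at key
  rw [L2.inner_def, L2.inner_def] at key
  have e1 : ∫ x, inner ℂ ((hu.toLp u : Lp (α := Euc d) ℂ 2) x) ((hu'.toLp u' : Lp (α := Euc d) ℂ 2) x)
      = ∫ x, u' x * (starRingEnd ℂ) (u x) := by
    apply integral_congr_ae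
    filter_upwards [hu.coeFn_toLp, hu'.coeFn_toLp] with x hx hx'
    rw [hx, hx']; rfl
  have e2 : ∫ x, inner ℂ (((memLp_scale hv).toLp _ : Lp (α := Euc d) ℂ 2) x) (((memLp_scale hv').toLp _ : Lp (α := Euc d) ℂ 2) x)
      = ∫ x, v' ((2 * Real.pi) • x) * (starRingEnd ℂ) (v ((2 * Real.pi) • x)) := by
    apply integral_congr_ae
    filter_upwards [(memLp_scale hv).coeFn_toLp, (memLp_scale hv').coeFn_toLp] with x hx hx'
    rw [hx, hx']; rfl
  rw [← e1, ← key, e2, Measure.integral_comp_smul (volume : Measure (Euc d))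
    (fun ξ => v' ξ * (starRingEnd ℂ) (v ξ)) (2 * Real.pi), finrank_euclideanSpace_fin,
    abs_of_pos (by positivity), Complex.real_smul]

theorem memLp_shift {d : ℕ} {F : Euc d → ℂ} (hF : MemLp F 2 volume) (b : Euc d) :
    MemLp (fun ξ => F (ξ - b)) 2 volume :=
  hF.comp_measurePreserving (measurePreserving_sub_right volume b)

theorem shift_tendsto {d : ℕ} {F : Euc d → ℂ} (hF : MemLp F 2 volume) (b : ℕ → Euc d)
    (hb : Tendsto b atTop (𝓝 0)) :
    Tendsto (fun n => ((memLp_shift hF (b n)).toLp _ : Lp (α := Euc d) ℂ 2 volume)) atTop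
      (𝓝 (hF.toLp F)) := by
  have h1 : ∀ n, ((memLp_shift hF (b n)).toLp _ : Lp (α := Euc d) ℂ 2 volume)
      = DomAddAct.mk (- b n) +ᵥ (hF.toLp F : Lp (α := Euc d) ℂ 2 volume) := by
    intro n
    rw [DomAddAct.mk_vadd_toLp]
    congr 1
    ext x
    simp [vadd_eq_add, sub_eq_add_neg, add_comm]
  have : Fact ((2:ℝ≥0∞) ≠ ∞) := ⟨by simp⟩
  have h2 : Tendsto (fun n => DomAddAct.mk (- b n) +ᵥ (hF.toLp F : Lp (α := Euc d) ℂ 2 volume)) atTop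
      (𝓝 (DomAddAct.mk (0 : Euc d) +ᵥ (hF.toLp F : Lp (α := Euc d) ℂ 2 volume))) := by
    refine Tendsto.vadd ?_ tendsto_const_nhds
    refine (DomAddAct.continuous_mk.tendsto _).comp ?_
    simpa using hb.neg
  simp only [h1]
  simpa using h2

theorem integrable_mult {d : ℕ} {F G : Euc d → ℂ} (hF : MemLp F 2 volume) (hG : MemLp G 2 volume)
    (m : Euc d → ℂ) (C : ℝ) (hm : AEStronglyMeasurable m volume) (hC : ∀ ξ, ‖m ξ‖ ≤ C) :
    Integrable (fun ξ => m ξ * (F ξ * (starRingEnd ℂ) (G ξ))) volume := by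
  have h1 : Integrable (fun ξ => F ξ * (starRingEnd ℂ) (G ξ)) volume := 
    hF.integrable_mul (q := 2) hG.star
  exact h1.bdd_mul hm (Eventually.of_forall hC)

theorem mult_limit {d : ℕ} {F G : Euc d → ℂ} (hF : MemLp F 2 volume) (hG : MemLp G 2 volume)
    (b : ℕ → Euc d) (hb : Tendsto b atTop (𝓝 0))
    (m : ℕ → Euc d → ℂ) (m' : Euc d → ℂ) (C : ℝ) (hm : ∀ n, AEStronglyMeasurable (m n) volume)
    (hC : ∀ n ξ, ‖m n ξ‖ ≤ C)
    (hlim : ∀ ξ, Tendsto (fun n => m n ξ) atTop (𝓝 (m' ξ))) :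
    Tendsto (fun n => ∫ ξ, m n ξ * (F (ξ - b n) * (starRingEnd ℂ) (G ξ))) atTop
      (𝓝 (∫ ξ, m' ξ * (F ξ * (starRingEnd ℂ) (G ξ)))) := by
  have hC0 : 0 ≤ C := (norm_nonneg _).trans (hC 0 0)
  have h1 : Tendsto (fun n => ∫ ξ, m n ξ * (F ξ * (starRingEnd ℂ) (G ξ))) atTop
      (𝓝 (∫ ξ, m' ξ * (F ξ * (starRingEnd ℂ) (G ξ)))) := by
    have hFG : Integrable (fun ξ => F ξ * (starRingEnd ℂ) (G ξ)) volume :=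
      hF.integrable_mul (q := 2) hG.star
    refine tendsto_integral_of_dominated_convergence
      (fun ξ => C * ‖F ξ * (starRingEnd ℂ) (G ξ)‖) ?_ (hFG.norm.const_mul C) ?_ ?_
    · intro n; exact (integrable_mult hF hG (m n) C (hm n) (hC n)).1
    · intro n; refine Eventually.of_forall fun ξ => ?_
      rw [norm_mul]
      exact mul_le_mul_of_nonneg_right (hC n ξ) (norm_nonneg _)
    · exact Eventually.of_forall fun ξ => (hlim ξ).mul_const _
  have h2 : Tendsto (fun n => ∫ ξ, m n ξ * ((F (ξ - b n) - F ξ) * (starRingEnd ℂ) (G ξ))) atTop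
      (𝓝 0) := by
    have hmG : ∀ n, MemLp (fun ξ => (starRingEnd ℂ) (m n ξ) * G ξ) 2 volume := by
      intro n
      refine MemLp.of_le_mul (c := C) hG ?_ ?_
      · exact (continuous_star.comp_aestronglyMeasurable (hm n)).mul hG.1
      · refine Eventually.of_forall fun ξ => ?_
        rw [norm_mul, RCLike.norm_conj]
        exact mul_le_mul_of_nonneg_right (hC n ξ) (norm_nonneg _)
    have e : ∀ n, ∫ ξ, m n ξ * ((F (ξ - b n) - F ξ) * (starRingEnd ℂ) (G ξ))
        = inner ℂ ((hmG n).toLp _ : Lp (α := Euc d) ℂ 2 volume)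
          (((memLp_shift hF (b n)).toLp _ : Lp (α := Euc d) ℂ 2 volume) - hF.toLp F) := by
      intro n
      rw [L2.inner_def]
      apply integral_congr_ae
      filter_upwards [(hmG n).coeFn_toLp, (memLp_shift hF (b n)).coeFn_toLp, hF.coeFn_toLp,
        Lp.coeFn_sub ((memLp_shift hF (b n)).toLp _ : Lp (α := Euc d) ℂ 2 volume) (hF.toLp F)]
        with ξ x1 x2 x3 x4
      rw [x4, Pi.sub_apply, x1, x2, x3, RCLike.inner_apply, map_mul, RCLike.conj_conj]
      ring
    simp only [e]
    have hn : ∀ n, ‖((hmG n).toLp _ : Lp (α := Euc d) ℂ 2 volume)‖ ≤ C * ‖(hG.toLp G : Lp (α := Euc d) ℂ 2 volume)‖ := by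
      intro n
      apply Lp.norm_le_mul_norm_of_ae_le_mul
      filter_upwards [(hmG n).coeFn_toLp, hG.coeFn_toLp] with ξ x1 x2
      rw [x1, x2, norm_mul, RCLike.norm_conj]
      exact mul_le_mul_of_nonneg_right (hC n ξ) (norm_nonneg _)
    have hz := (shift_tendsto hF b hb).sub_const (hF.toLp F : Lp (α := Euc d) ℂ 2 volume)
    rw [sub_self] at hz
    have hz' := (hz.norm).const_mul (C * ‖(hG.toLp G : Lp (α := Euc d) ℂ 2 volume)‖)
    rw [norm_zero, mul_zero] at hz'
    refine squeeze_zero_norm (fun n => ?_) hz'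
    exact (norm_inner_le_norm _ _).trans (mul_le_mul_of_nonneg_right (hn n) (norm_nonneg _))
  have h3 := h1.add h2
  rw [add_zero] at h3
  refine h3.congr fun n => ?_
  have i2 : Integrable (fun ξ => m n ξ * ((F (ξ - b n) - F ξ) * (starRingEnd ℂ) (G ξ))) volume :=
    integrable_mult ((memLp_shift hF (b n)).sub hF) hG (m n) C (hm n) (hC n)
  rw [← integral_add (integrable_mult hF hG (m n) C (hm n) (hC n)) i2]
  congr 1
  ext ξ
  ring

theorem jap_pos {d : ℕ} (ξ : Euc d) : 0 < jap ξ := by unfold jap; positivity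
theorem jap_sq {d : ℕ} (ξ : Euc d) : jap ξ ^ 2 = 1 + ‖ξ‖ ^ 2 := by
  unfold jap; rw [Real.sq_sqrt (by positivity)]
theorem one_le_jap {d : ℕ} (ξ : Euc d) : 1 ≤ jap ξ := by
  unfold jap; rw [Real.one_le_sqrt]; nlinarith [sq_nonneg ‖ξ‖]
theorem norm_lt_jap {d : ℕ} (ξ : Euc d) : ‖ξ‖ < jap ξ := by
  have := jap_sq ξ
  nlinarith [jap_pos ξ, norm_nonneg ξ]
@[fun_prop]
theorem continuous_jap {d : ℕ} : Continuous (jap : Euc d → ℝ) := by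
  unfold jap; fun_prop

theorem phase_lim {d : ℕ} (a ξ : Euc d) (s : ℕ → ℝ) (hs : Tendsto (fun n => (s n)⁻¹) atTop (𝓝 0))
    (hs0 : ∀ᶠ n in atTop, s n ≠ 0) :
    Tendsto (fun n => s n * jap (ξ - (s n)⁻¹ • a) - s n * jap ξ) atTop
      (𝓝 (-(⟪ξ, a⟫ / jap ξ))) := by
  have hb : Tendsto (fun n => ξ - (s n)⁻¹ • a) atTop (𝓝 ξ) := by
    simpa using (hs.smul_const a).const_sub ξ
  have hj : Tendsto (fun n => jap (ξ - (s n)⁻¹ • a)) atTop (𝓝 (jap ξ)) :=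
    (continuous_jap.tendsto ξ).comp hb
  have hp := jap_pos ξ
  have h1 : Tendsto (fun n => (-(2 * ⟪ξ, a⟫) + (s n)⁻¹ * ‖a‖ ^ 2) / (jap (ξ - (s n)⁻¹ • a) + jap ξ))
      atTop (𝓝 ((-(2 * ⟪ξ, a⟫) + 0 * ‖a‖ ^ 2) / (jap ξ + jap ξ))) :=
    ((hs.mul_const _).const_add _).div (hj.add_const _) (by positivity)
  have e : (-(2 * ⟪ξ, a⟫) + 0 * ‖a‖ ^ 2) / (jap ξ + jap ξ) = -(⟪ξ, a⟫ / jap ξ) := by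
    field_simp; ring
  rw [e] at h1
  refine h1.congr' ?_
  filter_upwards [hs0] with n hn
  have hp' := jap_pos (ξ - (s n)⁻¹ • a)
  rw [div_eq_iff (by positivity)]
  have q1 := jap_sq (ξ - (s n)⁻¹ • a)
  have q2 := jap_sq ξ
  rw [norm_sub_sq_real, real_inner_smul_right, norm_smul, mul_pow, Real.norm_eq_abs, sq_abs] at q1
  have : (s n * jap (ξ - (s n)⁻¹ • a) - s n * jap ξ) * (jap (ξ - (s n)⁻¹ • a) + jap ξ)
    = s n * (jap (ξ - (s n)⁻¹ • a) ^ 2 - jap ξ ^ 2) := by ring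
  rw [this, q1, q2]
  field_simp
  ring

/-- the ratio `M` -/
def Mr {d : ℕ} (η ξ : Euc d) : ℝ := (1 + ⟪η, ξ⟫) / (jap η * jap ξ)

theorem Mr_abs_le {d : ℕ} (η ξ : Euc d) : |Mr η ξ| ≤ 1 := by
  unfold Mr
  have h1 := jap_pos η
  have h2 := jap_pos ξ
  rw [abs_div, abs_of_pos (mul_pos h1 h2), div_le_one (mul_pos h1 h2)]
  apply abs_le_of_sq_le_sq _ (mul_pos h1 h2).le
  rw [mul_pow, jap_sq, jap_sq]
  have h3 := abs_real_inner_le_norm η ξ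
  have h5 : ⟪η, ξ⟫ ^ 2 ≤ (‖η‖ * ‖ξ‖) ^ 2 := sq_le_sq.2 (h3.trans (le_abs_self _))
  have h4 := (le_abs_self _).trans h3
  nlinarith [sq_nonneg (‖η‖ - ‖ξ‖)]

theorem Mr_cont {d : ℕ} (b : Euc d) : Continuous (fun ξ => Mr (ξ - b) ξ) := by
  unfold Mr
  refine Continuous.div ?_ ?_ ?_
  · fun_prop
  · fun_prop
  · intro ξ; exact (mul_pos (jap_pos _) (jap_pos _)).ne'

theorem Mr_lim {d : ℕ} (ξ : Euc d) (b : ℕ → Euc d) (hb : Tendsto b atTop (𝓝 0)) :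
    Tendsto (fun n => Mr (ξ - b n) ξ) atTop (𝓝 1) := by
  have hb' : Tendsto (fun n => ξ - b n) atTop (𝓝 ξ) := by
    simpa using hb.const_sub ξ
  have e : (1 + ⟪ξ, ξ⟫) / (jap ξ * jap ξ) = 1 := by
    rw [real_inner_self_eq_norm_sq, ← jap_sq, ← pow_two, div_self]
    exact (pow_pos (jap_pos _) 2).ne'
  rw [← e]
  unfold Mr
  refine Tendsto.div ?_ ?_ (mul_pos (jap_pos _) (jap_pos _)).ne'
  · exact (hb'.inner tendsto_const_nhds).const_add 1
  · exact ((continuous_jap.tendsto ξ).comp hb').mul_const _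

def Fp {d : ℕ} (v₀ v₁ : Euc d → ℂ) (ξ : Euc d) : ℂ := ((jap ξ : ℝ) * v₀ ξ - Complex.I * v₁ ξ) / 2
def Fm {d : ℕ} (v₀ v₁ : Euc d → ℂ) (ξ : Euc d) : ℂ := ((jap ξ : ℝ) * v₀ ξ + Complex.I * v₁ ξ) / 2

theorem vDt_eq {d : ℕ} (v₀ v₁ : Euc d → ℂ) (t : ℝ) (ξ : Euc d) :
    vDt v₀ v₁ t ξ = Complex.I * (Complex.exp (((t * jap ξ : ℝ) : ℂ) * Complex.I) * Fp v₀ v₁ ξ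
      - Complex.exp (-((t * jap ξ : ℝ) : ℂ) * Complex.I) * Fm v₀ v₁ ξ) := by
  unfold vDt Fp Fm
  rw [Complex.exp_mul_I, Complex.exp_mul_I, Complex.cos_neg, Complex.sin_neg,
    ← Complex.ofReal_cos, ← Complex.ofReal_sin]
  push_cast
  ring_nf
  simp only [Complex.I_sq]
  ring

theorem vW_eq {d : ℕ} (v₀ v₁ : Euc d → ℂ) (t : ℝ) (ξ : Euc d) :
    vW v₀ v₁ t ξ = (Complex.exp (((t * jap ξ : ℝ) : ℂ) * Complex.I) * Fp v₀ v₁ ξ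
      + Complex.exp (-((t * jap ξ : ℝ) : ℂ) * Complex.I) * Fm v₀ v₁ ξ) / (jap ξ : ℝ) := by
  have h : ((jap ξ : ℝ) : ℂ) ≠ 0 := by exact_mod_cast (jap_pos ξ).ne'
  unfold vW Fp Fm
  rw [eq_div_iff h, Complex.exp_mul_I, Complex.exp_mul_I, Complex.cos_neg, Complex.sin_neg,
    ← Complex.ofReal_cos, ← Complex.ofReal_sin]
  push_cast
  field_simp
  ring_nf
  simp only [Complex.I_sq]
  ring

theorem energy_identity {d : ℕ} (v₀ v₁ : Euc d → ℂ) (t : ℝ) (η ξ : Euc d) :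
    vDt v₀ v₁ t η * (starRingEnd ℂ) (vDt v₀ v₁ t ξ)
      + (∑ j : Fin d, (Complex.I * ((η j : ℝ) : ℂ) * vW v₀ v₁ t η) *
          (starRingEnd ℂ) (Complex.I * ((ξ j : ℝ) : ℂ) * vW v₀ v₁ t ξ))
      + vW v₀ v₁ t η * (starRingEnd ℂ) (vW v₀ v₁ t ξ)
    = ((Mr η ξ + 1 : ℝ) : ℂ) * Complex.exp (((t * jap η - t * jap ξ : ℝ) : ℂ) * Complex.I)
        * (Fp v₀ v₁ η * (starRingEnd ℂ) (Fp v₀ v₁ ξ))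
      + ((Mr η ξ + 1 : ℝ) : ℂ) * Complex.exp (((-(t * jap η - t * jap ξ) : ℝ) : ℂ) * Complex.I)
        * (Fm v₀ v₁ η * (starRingEnd ℂ) (Fm v₀ v₁ ξ))
      + ((Mr η ξ - 1 : ℝ) : ℂ) * Complex.exp (((t * jap η + t * jap ξ : ℝ) : ℂ) * Complex.I)
        * (Fp v₀ v₁ η * (starRingEnd ℂ) (Fm v₀ v₁ ξ))
      + ((Mr η ξ - 1 : ℝ) : ℂ) * Complex.exp (((-(t * jap η + t * jap ξ) : ℝ) : ℂ) * Complex.I)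
        * (Fm v₀ v₁ η * (starRingEnd ℂ) (Fp v₀ v₁ ξ)) := by
  have hM : ((Mr η ξ : ℝ) : ℂ) = (1 + ∑ j, ((η j : ℝ) : ℂ) * ((ξ j : ℝ) : ℂ)) / ((jap η : ℝ) * (jap ξ : ℝ)) := by
    unfold Mr
    rw [PiLp.inner_apply]
    push_cast
    congr 2
    apply Finset.sum_congr rfl
    intro j _
    simp [mul_comm]
  have hsum : (∑ j : Fin d, (Complex.I * ((η j : ℝ) : ℂ) * vW v₀ v₁ t η) *
          (starRingEnd ℂ) (Complex.I * ((ξ j : ℝ) : ℂ) * vW v₀ v₁ t ξ))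
       = (∑ j, ((η j : ℝ) : ℂ) * ((ξ j : ℝ) : ℂ)) * (vW v₀ v₁ t η * (starRingEnd ℂ) (vW v₀ v₁ t ξ)) := by
    rw [Finset.sum_mul]
    apply Finset.sum_congr rfl
    intro j _
    simp only [map_mul, Complex.conj_I, Complex.conj_ofReal]
    ring_nf
    simp only [Complex.I_sq]
    ring
  rw [hsum]
  have h1 : ((jap η : ℝ) : ℂ) ≠ 0 := by exact_mod_cast (jap_pos η).ne'
  have h2 : ((jap ξ : ℝ) : ℂ) ≠ 0 := by exact_mod_cast (jap_pos ξ).ne'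
  rw [vDt_eq, vDt_eq, vW_eq, vW_eq]
  simp only [map_mul, map_sub, map_add, map_div₀, Complex.conj_I, Complex.conj_ofReal,
    ← Complex.exp_conj, map_neg]
  have x1 : Complex.exp (((t * jap η - t * jap ξ : ℝ) : ℂ) * Complex.I)
    = Complex.exp (((t * jap η : ℝ) : ℂ) * Complex.I) * Complex.exp (-((t * jap ξ : ℝ) : ℂ) * Complex.I) := by
    rw [← Complex.exp_add]; congr 1; push_cast; ring
  have x2 : Complex.exp (((-(t * jap η - t * jap ξ) : ℝ) : ℂ) * Complex.I)
    = Complex.exp (-((t * jap η : ℝ) : ℂ) * Complex.I) * Complex.exp (((t * jap ξ : ℝ) : ℂ) * Complex.I) := by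
    rw [← Complex.exp_add]; congr 1; push_cast; ring
  have x3 : Complex.exp (((t * jap η + t * jap ξ : ℝ) : ℂ) * Complex.I)
    = Complex.exp (((t * jap η : ℝ) : ℂ) * Complex.I) * Complex.exp (((t * jap ξ : ℝ) : ℂ) * Complex.I) := by
    rw [← Complex.exp_add]; congr 1; push_cast; ring
  have x4 : Complex.exp (((-(t * jap η + t * jap ξ) : ℝ) : ℂ) * Complex.I)
    = Complex.exp (-((t * jap η : ℝ) : ℂ) * Complex.I) * Complex.exp (-((t * jap ξ : ℝ) : ℂ) * Complex.I) := by
    rw [← Complex.exp_add]; congr 1; push_cast; ring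
  have x5 : ((t * jap ξ : ℝ) : ℂ) * -Complex.I = -((t * jap ξ : ℝ) : ℂ) * Complex.I := by ring
  have x6 : -((t * jap ξ : ℝ) : ℂ) * -Complex.I = ((t * jap ξ : ℝ) : ℂ) * Complex.I := by ring
  rw [x1, x2, x3, x4, x5, x6, Complex.ofReal_add, Complex.ofReal_sub, hM, Complex.ofReal_one]
  generalize Complex.exp (((t * jap η : ℝ) : ℂ) * Complex.I) = p
  generalize Complex.exp (-((t * jap η : ℝ) : ℂ) * Complex.I) = p'
  generalize Complex.exp (((t * jap ξ : ℝ) : ℂ) * Complex.I) = q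
  generalize Complex.exp (-((t * jap ξ : ℝ) : ℂ) * Complex.I) = q'
  field_simp
  ring_nf
  simp only [Complex.I_sq]
  ring

def pm {d : ℕ} (φ : Euc d → Euc d) (ρ : Euc d → ℝ) : Measure (Euc d) :=
  ((volume : Measure (Euc d)).withDensity (fun x => ENNReal.ofReal (ρ x))).map φ

theorem pm_finite {d : ℕ} (φ : Euc d → Euc d) (ρ : Euc d → ℝ) (hρ : Integrable ρ volume) :
    IsFiniteMeasure (pm φ ρ) := by
  have := isFiniteMeasure_withDensity_ofReal hρ.2
  unfold pm
  infer_instance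

theorem pm_char {d : ℕ} (φ : Euc d → Euc d) (ρ : Euc d → ℝ) (hφ : Continuous φ)
    (hρ : Integrable ρ volume) (h0 : ∀ x, 0 ≤ ρ x) (a : Euc d) :
    charFun (pm φ ρ) a = ∫ x, Complex.exp (((⟪φ x, a⟫ : ℝ) : ℂ) * Complex.I) * ((ρ x : ℝ) : ℂ) := by
  rw [charFun_apply, pm, integral_map hφ.measurable.aemeasurable
    (by apply Continuous.aestronglyMeasurable; fun_prop)]
  rw [integral_withDensity_eq_integral_toReal_smul₀ hρ.1.aemeasurable.ennreal_ofReal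
    (Eventually.of_forall fun x => ENNReal.ofReal_lt_top)]
  congr 1
  ext x
  rw [ENNReal.toReal_ofReal (h0 x), Complex.real_smul, mul_comm]

theorem pm_real {d : ℕ} (φ : Euc d → Euc d) (ρ : Euc d → ℝ) (hφ : Continuous φ)
    (hρ : Integrable ρ volume) (h0 : ∀ x, 0 ≤ ρ x) (S : Set (Euc d)) (hS : MeasurableSet S) :
    (pm φ ρ).real S = ∫ x in φ ⁻¹' S, ρ x := by
  rw [measureReal_def, pm, Measure.map_apply hφ.measurable hS,
    withDensity_apply _ (hφ.measurable hS),
    integral_eq_lintegral_of_nonneg_ae (Eventually.of_forall h0) hρ.1.restrict]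

theorem pm_null {d : ℕ} (φ : Euc d → Euc d) (ρ : Euc d → ℝ) (hφ : Continuous φ)
    (S : Set (Euc d)) (hS : MeasurableSet S) (h : volume (φ ⁻¹' S) = 0) : pm φ ρ S = 0 := by
  rw [pm, Measure.map_apply hφ.measurable hS]
  exact withDensity_absolutelyContinuous _ _ h

theorem charFun_add_measure {d : ℕ} (μ ν : Measure (Euc d)) [IsFiniteMeasure μ] [IsFiniteMeasure ν]
    (a : Euc d) : charFun (μ + ν) a = charFun μ a + charFun ν a := by
  have key : ∀ (κ : Measure (Euc d)) [IsFiniteMeasure κ],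
      Integrable (fun x : Euc d => Complex.exp (((⟪x, a⟫ : ℝ) : ℂ) * Complex.I)) κ := by
    intro κ _
    refine Integrable.of_bound (C := 1) ?_ ?_
    · apply Continuous.aestronglyMeasurable; fun_prop
    · exact Eventually.of_forall fun x => (Complex.norm_exp_ofReal_mul_I _).le
  simp only [charFun_apply]
  exact integral_add_measure (key μ) (key ν)

theorem memLp_bdd {d : ℕ} {F : Euc d → ℂ} (hF : MemLp F 2 volume) (m : Euc d → ℂ)
    (hm : Continuous m) (C : ℝ) (hC : ∀ ξ, ‖m ξ‖ ≤ C) :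
    MemLp (fun ξ => m ξ * F ξ) 2 volume := by
  refine MemLp.of_le_mul (c := C) hF (hm.aestronglyMeasurable.mul hF.1) ?_
  refine Eventually.of_forall fun ξ => ?_
  rw [norm_mul]
  exact mul_le_mul_of_nonneg_right (hC ξ) (norm_nonneg _)

theorem Fp_mem {d : ℕ} {v₀ v₁ : Euc d → ℂ}
    (hH1 : MemLp (fun ξ => ((jap ξ : ℝ) : ℂ) * v₀ ξ) 2 (volume : Measure (Euc d)))
    (hv₁L2 : MemLp v₁ 2 (volume : Measure (Euc d))) : MemLp (Fp v₀ v₁) 2 volume := by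
  have : Fp v₀ v₁ = fun ξ => (2⁻¹ : ℂ) * (((jap ξ : ℝ) : ℂ) * v₀ ξ - Complex.I * v₁ ξ) := by
    ext ξ; unfold Fp; ring
  rw [this]
  exact (hH1.sub (hv₁L2.const_mul _)).const_mul _

theorem Fm_mem {d : ℕ} {v₀ v₁ : Euc d → ℂ}
    (hH1 : MemLp (fun ξ => ((jap ξ : ℝ) : ℂ) * v₀ ξ) 2 (volume : Measure (Euc d)))
    (hv₁L2 : MemLp v₁ 2 (volume : Measure (Euc d))) : MemLp (Fm v₀ v₁) 2 volume := by
  have : Fm v₀ v₁ = fun ξ => (2⁻¹ : ℂ) * (((jap ξ : ℝ) : ℂ) * v₀ ξ + Complex.I * v₁ ξ) := by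
    ext ξ; unfold Fm; ring
  rw [this]
  exact (hH1.add (hv₁L2.const_mul _)).const_mul _

theorem norm_exp_neg {r : ℝ} : ‖Complex.exp (-((r : ℝ) : ℂ) * Complex.I)‖ = 1 := by
  have := Complex.norm_exp_ofReal_mul_I (-r)
  rwa [Complex.ofReal_neg] at this

theorem vDt_mem {d : ℕ} {v₀ v₁ : Euc d → ℂ} 
    (hp : MemLp (Fp v₀ v₁) 2 volume) (hm : MemLp (Fm v₀ v₁) 2 volume) (t : ℝ) :
    MemLp (vDt v₀ v₁ t) 2 volume := by
  have : vDt v₀ v₁ t = _ := funext (vDt_eq v₀ v₁ t)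
  rw [this]
  refine ((memLp_bdd hp _ (by fun_prop) 1 ?_).sub (memLp_bdd hm _ (by fun_prop) 1 ?_)).const_mul _
  · exact fun ξ => (Complex.norm_exp_ofReal_mul_I _).le
  · exact fun ξ => norm_exp_neg.le

theorem mW_mem {d : ℕ} {v₀ v₁ : Euc d → ℂ} 
    (hp : MemLp (Fp v₀ v₁) 2 volume) (hm : MemLp (Fm v₀ v₁) 2 volume) (t : ℝ)
    (m : Euc d → ℂ) (hmc : Continuous m) (hb : ∀ ξ, ‖m ξ‖ ≤ jap ξ) :
    MemLp (fun ξ => m ξ * vW v₀ v₁ t ξ) 2 volume := by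
  have h1 : MemLp (fun ξ => Complex.exp (((t * jap ξ : ℝ) : ℂ) * Complex.I) * Fp v₀ v₁ ξ
      + Complex.exp (-((t * jap ξ : ℝ) : ℂ) * Complex.I) * Fm v₀ v₁ ξ) 2 volume := by
    refine ((memLp_bdd hp _ (by fun_prop) 1 ?_).add (memLp_bdd hm _ (by fun_prop) 1 ?_))
    · exact fun ξ => (Complex.norm_exp_ofReal_mul_I _).le
    · exact fun ξ => norm_exp_neg.le
  have h2 := memLp_bdd h1 (fun ξ => m ξ / (jap ξ : ℝ)) ?_ 1 ?_
  · refine h2.ae_eq (Eventually.of_forall fun ξ => ?_)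
    simp only [vW_eq]
    ring
  · refine hmc.div (by fun_prop) fun ξ => ?_
    exact_mod_cast (jap_pos ξ).ne'
  · intro ξ
    rw [norm_div, Complex.norm_real, Real.norm_of_nonneg (jap_pos ξ).le, div_le_one (jap_pos ξ)]
    exact hb ξ

theorem char_comp {d : ℕ} {u v : Euc d → ℂ} (hu : MemLp u 2 volume) (hv : MemLp v 2 volume)
    (h : IsFourierTransformOf u v) (b : Euc d) :
    ∫ x, Complex.exp (((⟪x, b⟫ : ℝ) : ℂ) * Complex.I) * ((‖u x‖ ^ 2 : ℝ) : ℂ)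
      = ((((2 * Real.pi) ^ d : ℝ))⁻¹ : ℝ) * ∫ ξ, v (ξ - b) * (starRingEnd ℂ) (v ξ) := by
  have hu' := memLp_bdd hu (fun x => Complex.exp (((⟪x, b⟫ : ℝ) : ℂ) * Complex.I)) (by fun_prop) 1
    (fun ξ => (Complex.norm_exp_ofReal_mul_I _).le)
  rw [← plancherel hu hv h hu' (memLp_shift hv b) (IsFT_mod h b)]
  congr 1
  ext x
  rw [mul_assoc, Complex.mul_conj, Complex.normSq_eq_norm_sq]

theorem integrable_exp_sq {d : ℕ} {u : Euc d → ℂ} (hu : MemLp u 2 volume) (b : Euc d) :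
    Integrable (fun x => Complex.exp (((⟪x, b⟫ : ℝ) : ℂ) * Complex.I) * ((‖u x‖ ^ 2 : ℝ) : ℂ)) volume := by
  have := integrable_mult hu hu (fun x => Complex.exp (((⟪x, b⟫ : ℝ) : ℂ) * Complex.I)) 1
    (by apply Continuous.aestronglyMeasurable; fun_prop)
    (fun ξ => (Complex.norm_exp_ofReal_mul_I _).le)
  refine this.congr (Eventually.of_forall fun x => ?_)
  simp only [Complex.mul_conj, Complex.normSq_eq_norm_sq]

theorem integrable_shift {d : ℕ} {v : Euc d → ℂ} (hv : MemLp v 2 volume) (b : Euc d) :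
    Integrable (fun ξ => v (ξ - b) * (starRingEnd ℂ) (v ξ)) volume :=
  (memLp_shift hv b).integrable_mul (q := 2) hv.star

theorem integral_sum3 {d : ℕ} (f g : Euc d → ℂ) (h : Fin d → Euc d → ℂ) (hf : Integrable f volume)
    (hg : Integrable g volume) (hh : ∀ j, Integrable (h j) volume) :
    ∫ x, (f x + (∑ j, h j x) + g x) = (∫ x, f x) + (∑ j, ∫ x, h j x) + ∫ x, g x := by
  have hs : Integrable (fun x => ∑ j, h j x) volume := integrable_finsetSum _ fun j _ => hh j
  have h2 : Integrable (fun x => f x + ∑ j, h j x) volume := hf.add hs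
  rw [integral_add h2 hg, integral_add hf hs, integral_finsetSum _ (fun j _ => hh j)]

/-- the energy density -/
theorem char_total {d : ℕ} {v₀ v₁ : Euc d → ℂ} (t : ℝ)
    (hp : MemLp (Fp v₀ v₁) 2 volume) (hm : MemLp (Fm v₀ v₁) 2 volume)
    (w dw : Euc d → ℂ) (jw : Fin d → Euc d → ℂ)
    (hw : MemLp w 2 volume ∧ IsFourierTransformOf w (vW v₀ v₁ t))
    (hdw : MemLp dw 2 volume ∧ IsFourierTransformOf dw (vDt v₀ v₁ t))
    (hjw : ∀ j, MemLp (jw j) 2 volume ∧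
      IsFourierTransformOf (jw j) (fun ξ => Complex.I * ((ξ j : ℝ) : ℂ) * vW v₀ v₁ t ξ))
    (b : Euc d) :
    ∫ x, Complex.exp (((⟪x, b⟫ : ℝ) : ℂ) * Complex.I) *
        ((‖dw x‖ ^ 2 + (∑ j : Fin d, ‖jw j x‖ ^ 2) + ‖w x‖ ^ 2 : ℝ) : ℂ)
      = ((((2 * Real.pi) ^ d : ℝ))⁻¹ : ℝ) * ∫ ξ,
        (vDt v₀ v₁ t (ξ - b) * (starRingEnd ℂ) (vDt v₀ v₁ t ξ)
        + (∑ j : Fin d, (Complex.I * (((ξ - b) j : ℝ) : ℂ) * vW v₀ v₁ t (ξ - b)) *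
          (starRingEnd ℂ) (Complex.I * ((ξ j : ℝ) : ℂ) * vW v₀ v₁ t ξ))
        + vW v₀ v₁ t (ξ - b) * (starRingEnd ℂ) (vW v₀ v₁ t ξ)) := by
  have hW : MemLp (vW v₀ v₁ t) 2 volume := by
    simpa using mW_mem hp hm t (fun _ => 1) continuous_const (fun ξ => by simpa using one_le_jap ξ)
  have hD := vDt_mem hp hm t
  have hJ : ∀ j : Fin d, MemLp (fun ξ : Euc d => Complex.I * ((ξ j : ℝ) : ℂ) * vW v₀ v₁ t ξ) 2 volume := by
    intro j
    refine mW_mem hp hm t (fun ξ => Complex.I * ((ξ j : ℝ) : ℂ)) (by fun_prop) fun ξ => ?_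
    rw [norm_mul, Complex.norm_I, one_mul, Complex.norm_real]
    exact (PiLp.norm_apply_le ξ j).trans (norm_lt_jap ξ).le
  have iW := integrable_shift hW b
  have iD := integrable_shift hD b
  have iJ := fun j => integrable_shift (hJ j) b
  rw [integral_sum3 (fun ξ => vDt v₀ v₁ t (ξ - b) * (starRingEnd ℂ) (vDt v₀ v₁ t ξ))
    (fun ξ => vW v₀ v₁ t (ξ - b) * (starRingEnd ℂ) (vW v₀ v₁ t ξ))
    (fun j ξ => (Complex.I * (((ξ - b) j : ℝ) : ℂ) * vW v₀ v₁ t (ξ - b)) *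
          (starRingEnd ℂ) (Complex.I * ((ξ j : ℝ) : ℂ) * vW v₀ v₁ t ξ)) iD iW iJ,
    mul_add, mul_add, Finset.mul_sum,
    ← char_comp hw.1 hW hw.2 b, ← char_comp hdw.1 hD hdw.2 b]
  simp only [← fun j => char_comp (hjw j).1 (hJ j) (hjw j).2 b]
  rw [← integral_sum3 _ _ _ (integrable_exp_sq hdw.1 b) (integrable_exp_sq hw.1 b)
    (fun j => integrable_exp_sq (hjw j).1 b)]
  congr 1
  ext x
  push_cast
  rw [mul_add, mul_add, Finset.mul_sum]

theorem norm_mult_le {x r : ℝ} {C : ℝ} (hx : |x| ≤ C) :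
    ‖(x : ℂ) * Complex.exp ((r : ℂ) * Complex.I)‖ ≤ C := by
  rw [norm_mul, Complex.norm_exp_ofReal_mul_I, mul_one, Complex.norm_real]
  exact hx

theorem char_limit {d : ℕ} {v₀ v₁ : Euc d → ℂ}
    (hp : MemLp (Fp v₀ v₁) 2 volume) (hm : MemLp (Fm v₀ v₁) 2 volume)
    (a : Euc d) (s : ℕ → ℝ) (hs : Tendsto (fun n => (s n)⁻¹) atTop (𝓝 0))
    (hs0 : ∀ᶠ n in atTop, s n ≠ 0) :
    Tendsto (fun n => ∫ ξ,
        (vDt v₀ v₁ (s n) (ξ - (s n)⁻¹ • a) * (starRingEnd ℂ) (vDt v₀ v₁ (s n) ξ)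
        + (∑ j : Fin d, (Complex.I * (((ξ - (s n)⁻¹ • a) j : ℝ) : ℂ) * vW v₀ v₁ (s n) (ξ - (s n)⁻¹ • a)) *
          (starRingEnd ℂ) (Complex.I * ((ξ j : ℝ) : ℂ) * vW v₀ v₁ (s n) ξ))
        + vW v₀ v₁ (s n) (ξ - (s n)⁻¹ • a) * (starRingEnd ℂ) (vW v₀ v₁ (s n) ξ))) atTop
      (𝓝 ((∫ ξ, (((2 : ℝ) : ℂ) * Complex.exp (((-(⟪ξ, a⟫ / jap ξ) : ℝ) : ℂ) * Complex.I))
            * (Fp v₀ v₁ ξ * (starRingEnd ℂ) (Fp v₀ v₁ ξ)))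
        + ∫ ξ, (((2 : ℝ) : ℂ) * Complex.exp (((⟪ξ, a⟫ / jap ξ : ℝ) : ℂ) * Complex.I))
            * (Fm v₀ v₁ ξ * (starRingEnd ℂ) (Fm v₀ v₁ ξ)))) := by
  simp only [energy_identity]
  have hb : Tendsto (fun n => (s n)⁻¹ • a) atTop (𝓝 0) := by
    simpa using hs.smul_const a
  set b : ℕ → Euc d := fun n => (s n)⁻¹ • a with hbdef
  have hbb : ∀ n, (s n)⁻¹ • a = b n := fun n => rfl
  simp only [hbb]
  let m1 : ℕ → Euc d → ℂ := fun n ξ => ((Mr (ξ - b n) ξ + 1 : ℝ) : ℂ) *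
    Complex.exp (((s n * jap (ξ - b n) - s n * jap ξ : ℝ) : ℂ) * Complex.I)
  let m2 : ℕ → Euc d → ℂ := fun n ξ => ((Mr (ξ - b n) ξ + 1 : ℝ) : ℂ) *
    Complex.exp (((-(s n * jap (ξ - b n) - s n * jap ξ) : ℝ) : ℂ) * Complex.I)
  let m3 : ℕ → Euc d → ℂ := fun n ξ => ((Mr (ξ - b n) ξ - 1 : ℝ) : ℂ) *
    Complex.exp (((s n * jap (ξ - b n) + s n * jap ξ : ℝ) : ℂ) * Complex.I)
  let m4 : ℕ → Euc d → ℂ := fun n ξ => ((Mr (ξ - b n) ξ - 1 : ℝ) : ℂ) *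
    Complex.exp (((-(s n * jap (ξ - b n) + s n * jap ξ) : ℝ) : ℂ) * Complex.I)
  have bp : ∀ (η ξ : Euc d), |Mr η ξ + 1| ≤ 2 := fun η ξ => by
    have := abs_le.1 (Mr_abs_le η ξ)
    exact abs_le.2 ⟨by linarith, by linarith⟩
  have bm : ∀ (η ξ : Euc d), |Mr η ξ - 1| ≤ 2 := fun η ξ => by
    have := abs_le.1 (Mr_abs_le η ξ)
    exact abs_le.2 ⟨by linarith, by linarith⟩
  have c1 : ∀ n, AEStronglyMeasurable (m1 n) volume := fun n => by
    have := Mr_cont (b n)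
    apply Continuous.aestronglyMeasurable; fun_prop
  have c2 : ∀ n, AEStronglyMeasurable (m2 n) volume := fun n => by
    have := Mr_cont (b n)
    apply Continuous.aestronglyMeasurable; fun_prop
  have c3 : ∀ n, AEStronglyMeasurable (m3 n) volume := fun n => by
    have := Mr_cont (b n)
    apply Continuous.aestronglyMeasurable; fun_prop
  have c4 : ∀ n, AEStronglyMeasurable (m4 n) volume := fun n => by
    have := Mr_cont (b n)
    apply Continuous.aestronglyMeasurable; fun_prop
  have n1 : ∀ n ξ, ‖m1 n ξ‖ ≤ 2 := fun n ξ => norm_mult_le (bp _ _)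
  have n2 : ∀ n ξ, ‖m2 n ξ‖ ≤ 2 := fun n ξ => norm_mult_le (bp _ _)
  have n3 : ∀ n ξ, ‖m3 n ξ‖ ≤ 2 := fun n ξ => norm_mult_le (bm _ _)
  have n4 : ∀ n ξ, ‖m4 n ξ‖ ≤ 2 := fun n ξ => norm_mult_le (bm _ _)
  have hMp : ∀ ξ : Euc d, Tendsto (fun n => ((Mr (ξ - b n) ξ + 1 : ℝ) : ℂ)) atTop (𝓝 ((2 : ℝ) : ℂ)) := by
    intro ξ
    have h := (Mr_lim ξ b hb).add_const 1
    norm_num at h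
    exact (Complex.continuous_ofReal.tendsto _).comp h
  have hMm : ∀ ξ : Euc d, Tendsto (fun n => (Mr (ξ - b n) ξ - 1 : ℝ)) atTop (𝓝 0) := by
    intro ξ
    have h := (Mr_lim ξ b hb).sub_const 1
    norm_num at h
    exact h
  have hexp : Continuous (fun r : ℝ => Complex.exp ((r : ℂ) * Complex.I)) := by fun_prop
  have l1 : ∀ ξ, Tendsto (fun n => m1 n ξ) atTop
      (𝓝 (((2 : ℝ) : ℂ) * Complex.exp (((-(⟪ξ, a⟫ / jap ξ) : ℝ) : ℂ) * Complex.I))) := fun ξ =>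
    (hMp ξ).mul ((hexp.tendsto _).comp (phase_lim a ξ s hs hs0))
  have l2 : ∀ ξ, Tendsto (fun n => m2 n ξ) atTop
      (𝓝 (((2 : ℝ) : ℂ) * Complex.exp (((⟪ξ, a⟫ / jap ξ : ℝ) : ℂ) * Complex.I))) := fun ξ => by
    have h := (phase_lim a ξ s hs hs0).neg
    rw [neg_neg] at h
    exact (hMp ξ).mul ((hexp.tendsto _).comp h)
  have l3 : ∀ ξ, Tendsto (fun n => m3 n ξ) atTop (𝓝 0) := fun ξ => by
    refine squeeze_zero_norm (fun n => norm_mult_le le_rfl) ?_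
    simpa using (hMm ξ).abs
  have l4 : ∀ ξ, Tendsto (fun n => m4 n ξ) atTop (𝓝 0) := fun ξ => by
    refine squeeze_zero_norm (fun n => norm_mult_le le_rfl) ?_
    simpa using (hMm ξ).abs
  have t1 := mult_limit hp hp b hb m1 _ 2 c1 n1 l1
  have t2 := mult_limit hm hm b hb m2 _ 2 c2 n2 l2
  have t3 := mult_limit hp hm b hb m3 _ 2 c3 n3 l3
  have t4 := mult_limit hm hp b hb m4 _ 2 c4 n4 l4
  have tt := ((t1.add t2).add t3).add t4
  simp only [zero_mul, integral_zero, add_zero] at tt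
  refine tt.congr fun n => ?_
  have i1 := integrable_mult (memLp_shift hp (b n)) hp (m1 n) 2 (c1 n) (n1 n)
  have i2 := integrable_mult (memLp_shift hm (b n)) hm (m2 n) 2 (c2 n) (n2 n)
  have i3 := integrable_mult (memLp_shift hp (b n)) hm (m3 n) 2 (c3 n) (n3 n)
  have i4 := integrable_mult (memLp_shift hm (b n)) hp (m4 n) 2 (c4 n) (n4 n)
  have i12 : Integrable (fun ξ => m1 n ξ * (Fp v₀ v₁ (ξ - b n) * (starRingEnd ℂ) (Fp v₀ v₁ ξ)) + m2 n ξ * (Fm v₀ v₁ (ξ - b n) * (starRingEnd ℂ) (Fm v₀ v₁ ξ))) volume := i1.add i2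
  have i123 : Integrable (fun ξ => m1 n ξ * (Fp v₀ v₁ (ξ - b n) * (starRingEnd ℂ) (Fp v₀ v₁ ξ)) + m2 n ξ * (Fm v₀ v₁ (ξ - b n) * (starRingEnd ℂ) (Fm v₀ v₁ ξ)) + m3 n ξ * (Fp v₀ v₁ (ξ - b n) * (starRingEnd ℂ) (Fm v₀ v₁ ξ))) volume := i12.add i3
  rw [← integral_add i1 i2, ← integral_add i12 i3, ← integral_add i123 i4]

theorem null_level {d : ℕ} (hd : 1 ≤ d) (r : ℝ≥0∞) :
    (volume : Measure (Euc d)) {ξ | ENNReal.ofReal (‖ξ‖ / jap ξ) = r} = 0 := by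
  have : Nonempty (Fin d) := ⟨⟨0, hd⟩⟩
  refine measure_mono_null ?_ (Measure.addHaar_sphere (volume : Measure (Euc d)) 0
    (Real.sqrt (r.toReal ^ 2 / (1 - r.toReal ^ 2))))
  intro ξ hξ
  simp only [Set.mem_setOf_eq] at hξ
  have hj := jap_pos ξ
  have hq : r.toReal = ‖ξ‖ / jap ξ := by
    rw [← hξ, ENNReal.toReal_ofReal (by positivity)]
  have h1 : r.toReal ^ 2 / (1 - r.toReal ^ 2) = ‖ξ‖ ^ 2 := by
    have h2 : 1 - r.toReal ^ 2 = 1 / (1 + ‖ξ‖ ^ 2) := by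
      rw [hq, div_pow, jap_sq]
      have : (0:ℝ) < 1 + ‖ξ‖ ^ 2 := by positivity
      field_simp
      ring
    rw [h2, hq, div_pow, jap_sq]
    have : (0:ℝ) < 1 + ‖ξ‖ ^ 2 := by positivity
    field_simp
  rw [h1, Real.sqrt_sq (norm_nonneg _)]
  simp

theorem core {d : ℕ} (hd : 1 ≤ d) (v₀ v₁ : Euc d → ℂ)
    (hH1 : MemLp (fun ξ => ((jap ξ : ℝ) : ℂ) * v₀ ξ) 2 (volume : Measure (Euc d)))
    (hv₁L2 : MemLp v₁ 2 (volume : Measure (Euc d)))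
    (wfun dtw : ℝ → Euc d → ℂ) (djw : ℝ → Fin d → Euc d → ℂ)
    (hwfun : ∀ t : ℝ, MemLp (wfun t) 2 (volume : Measure (Euc d)) ∧
      IsFourierTransformOf (wfun t) (vW v₀ v₁ t))
    (hdtw : ∀ t : ℝ, MemLp (dtw t) 2 (volume : Measure (Euc d)) ∧
      IsFourierTransformOf (dtw t) (vDt v₀ v₁ t))
    (hdjw : ∀ t : ℝ, ∀ j : Fin d, MemLp (djw t j) 2 (volume : Measure (Euc d)) ∧
      IsFourierTransformOf (djw t j)
        (fun ξ => Complex.I * ((ξ j : ℝ) : ℂ) * vW v₀ v₁ t ξ))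
    (r₀ r₁ : ℝ≥0∞) (s : ℕ → ℝ) (hs : Tendsto (fun n => (s n)⁻¹) atTop (𝓝 0))
    (hs0 : ∀ᶠ n in atTop, s n ≠ 0) :
    Tendsto (fun n => localEnergy wfun dtw djw r₀ r₁ (s n)) atTop
      (𝓝 ((((2 * Real.pi) ^ d : ℝ))⁻¹ *
        ∫ ξ in {ξ : Euc d | r₀ < ENNReal.ofReal (‖ξ‖ / jap ξ) ∧
            ENNReal.ofReal (‖ξ‖ / jap ξ) < r₁},
          ((1 + ‖ξ‖ ^ 2) * ‖v₀ ξ‖ ^ 2 + ‖v₁ ξ‖ ^ 2))) := by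
  have hp := Fp_mem hH1 hv₁L2
  have hm := Fm_mem hH1 hv₁L2
  set c : ℝ := (((2 * Real.pi) ^ d : ℝ))⁻¹ with hc
  have hc0 : 0 ≤ c := by positivity
  have sqi : ∀ {u : Euc d → ℂ}, MemLp u 2 volume → Integrable (fun x => ‖u x‖ ^ 2) volume :=
    fun {u} hu => (memLp_two_iff_integrable_sq_norm hu.1).1 hu
  -- the energy densities
  let e : ℝ → Euc d → ℝ := fun t x => ‖dtw t x‖ ^ 2 + (∑ j : Fin d, ‖djw t j x‖ ^ 2) + ‖wfun t x‖ ^ 2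
  have ei : ∀ t, Integrable (e t) volume := fun t =>
    ((sqi (hdtw t).1).add (integrable_finsetSum _ fun j _ => sqi (hdjw t j).1)).add (sqi (hwfun t).1)
  have e0 : ∀ t x, 0 ≤ e t x := fun t x => by
    have : 0 ≤ ∑ j : Fin d, ‖djw t j x‖ ^ 2 := Finset.sum_nonneg fun j _ => by positivity
    positivity
  let μ : ℕ → Measure (Euc d) := fun n => pm (fun x => (s n)⁻¹ • x) (e (s n))
  have hμf : ∀ n, IsFiniteMeasure (μ n) := fun n => pm_finite _ _ (ei _)
  let ρp : Euc d → ℝ := fun ξ => 2 * c * ‖Fp v₀ v₁ ξ‖ ^ 2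
  let ρm : Euc d → ℝ := fun ξ => 2 * c * ‖Fm v₀ v₁ ξ‖ ^ 2
  have ip : Integrable ρp volume := (sqi hp).const_mul _
  have im : Integrable ρm volume := (sqi hm).const_mul _
  have p0 : ∀ ξ, 0 ≤ ρp ξ := fun ξ => by positivity
  have m0 : ∀ ξ, 0 ≤ ρm ξ := fun ξ => by positivity
  let φp : Euc d → Euc d := fun ξ => -((jap ξ)⁻¹ • ξ)
  let φm : Euc d → Euc d := fun ξ => (jap ξ)⁻¹ • ξ
  have hφm : Continuous φm :=
    (Continuous.inv₀ continuous_jap fun ξ => (jap_pos ξ).ne').smul continuous_id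
  have hφp : Continuous φp := hφm.neg
  have nφm : ∀ ξ, ‖φm ξ‖ = ‖ξ‖ / jap ξ := fun ξ => by
    simp only [φm]
    rw [norm_smul, norm_inv, Real.norm_of_nonneg (jap_pos ξ).le, div_eq_inv_mul]
  have nφp : ∀ ξ, ‖φp ξ‖ = ‖ξ‖ / jap ξ := fun ξ => by
    simp only [φp]
    rw [norm_neg]; exact nφm ξ
  have fp := pm_finite φp ρp ip
  have fm := pm_finite φm ρm im
  let ν : Measure (Euc d) := pm φp ρp + pm φm ρm
  let f : Euc d → ℝ≥0∞ := fun y => ENNReal.ofReal ‖y‖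
  have hf : Continuous f := ENNReal.continuous_ofReal.comp continuous_norm
  let S : Set (Euc d) := f ⁻¹' Set.Ioo r₀ r₁
  have hSm : MeasurableSet S := hf.measurable measurableSet_Ioo
  have hnull : ∀ r : ℝ≥0∞, ν (f ⁻¹' {r}) = 0 := by
    intro r
    have hms : MeasurableSet (f ⁻¹' {r}) := hf.measurable (measurableSet_singleton r)
    have q1 : φp ⁻¹' (f ⁻¹' {r}) = {ξ | ENNReal.ofReal (‖ξ‖ / jap ξ) = r} := by
      ext ξ; simp only [f, nφp, Set.mem_preimage, Set.mem_singleton_iff, Set.mem_ofPred_eq]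
    have q2 : φm ⁻¹' (f ⁻¹' {r}) = {ξ | ENNReal.ofReal (‖ξ‖ / jap ξ) = r} := by
      ext ξ; simp only [f, nφm, Set.mem_preimage, Set.mem_singleton_iff, Set.mem_ofPred_eq]
    simp only [ν, Measure.add_apply]
    rw [pm_null φp ρp hφp _ hms (by rw [q1]; exact null_level hd r),
      pm_null φm ρm hφm _ hms (by rw [q2]; exact null_level hd r), add_zero]
  have hfr : ν (frontier S) = 0 := by
    refine measure_mono_null (t := f ⁻¹' {r₀} ∪ f ⁻¹' {r₁}) ?_
      (measure_union_null (hnull r₀) (hnull r₁))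
    refine (hf.frontier_preimage_subset _).trans ?_
    rw [← Set.preimage_union]
    refine Set.preimage_mono ?_
    intro r hr
    by_cases h : r₀ < r₁
    · rw [frontier, closure_Ioo h.ne, isOpen_Ioo.interior_eq] at hr
      have hr1 := hr.1
      have hr2 := hr.2
      simp only [Set.mem_Icc, Set.mem_Ioo, not_and_or, not_lt] at hr1 hr2
      rcases hr2 with h2 | h2
      · exact Or.inl (le_antisymm h2 hr1.1)
      · exact Or.inr (le_antisymm hr1.2 h2)
    · rw [Set.Ioo_eq_empty h] at hr
      simp at hr
  have hchar : ∀ a : Euc d, Tendsto (fun n => charFun (μ n) a) atTop (𝓝 (charFun ν a)) := by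
    intro a
    have hl := (char_limit hp hm a s hs hs0).const_mul ((c : ℝ) : ℂ)
    have en : ∀ n, charFun (μ n) a = (c : ℂ) * ∫ ξ,
        (vDt v₀ v₁ (s n) (ξ - (s n)⁻¹ • a) * (starRingEnd ℂ) (vDt v₀ v₁ (s n) ξ)
        + (∑ j : Fin d, (Complex.I * (((ξ - (s n)⁻¹ • a) j : ℝ) : ℂ) * vW v₀ v₁ (s n) (ξ - (s n)⁻¹ • a)) *
          (starRingEnd ℂ) (Complex.I * ((ξ j : ℝ) : ℂ) * vW v₀ v₁ (s n) ξ))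
        + vW v₀ v₁ (s n) (ξ - (s n)⁻¹ • a) * (starRingEnd ℂ) (vW v₀ v₁ (s n) ξ)) := by
      intro n
      rw [pm_char _ _ (by fun_prop) (ei _) (e0 _)]
      rw [← char_total (s n) hp hm (wfun (s n)) (dtw (s n)) (djw (s n)) (hwfun _) (hdtw _) (hdjw _)]
      congr 1
      ext x
      rw [real_inner_smul_left, real_inner_smul_right]
    simp only [en]
    convert hl using 2
    simp only [ν]
    rw [charFun_add_measure, pm_char φp ρp hφp ip p0, pm_char φm ρm hφm im m0, mul_add,
      ← integral_const_mul, ← integral_const_mul]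
    congr 1
    · congr 1
      ext ξ
      rw [Complex.mul_conj, Complex.normSq_eq_norm_sq]
      simp only [φp, ρp]
      rw [inner_neg_left, real_inner_smul_left, div_eq_inv_mul]
      push_cast
      ring
    · congr 1
      ext ξ
      rw [Complex.mul_conj, Complex.normSq_eq_norm_sq]
      simp only [φm, ρm]
      rw [real_inner_smul_left, div_eq_inv_mul]
      push_cast
      ring
  have key := levy_finite μ ν hchar S hfr
  have k1 : ∀ n, (μ n).real S = localEnergy wfun dtw djw r₀ r₁ (s n) := by
    intro n
    simp only [μ]
    rw [pm_real _ _ (by fun_prop) (ei _) (e0 _) S hSm]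
    unfold localEnergy
    congr 2
    ext x
    simp only [S, f, Set.mem_preimage, Set.mem_Ioo, Set.mem_setOf_eq, norm_smul, norm_inv,
      Real.norm_eq_abs, div_eq_inv_mul]
  have k2 : ν.real S = c *
        ∫ ξ in {ξ : Euc d | r₀ < ENNReal.ofReal (‖ξ‖ / jap ξ) ∧
            ENNReal.ofReal (‖ξ‖ / jap ξ) < r₁},
          ((1 + ‖ξ‖ ^ 2) * ‖v₀ ξ‖ ^ 2 + ‖v₁ ξ‖ ^ 2) := by
    have q1 : φp ⁻¹' S = {ξ : Euc d | r₀ < ENNReal.ofReal (‖ξ‖ / jap ξ) ∧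
            ENNReal.ofReal (‖ξ‖ / jap ξ) < r₁} := by
      ext ξ; simp only [S, f, nφp, Set.mem_preimage, Set.mem_Ioo, Set.mem_ofPred_eq]
    have q2 : φm ⁻¹' S = {ξ : Euc d | r₀ < ENNReal.ofReal (‖ξ‖ / jap ξ) ∧
            ENNReal.ofReal (‖ξ‖ / jap ξ) < r₁} := by
      ext ξ; simp only [S, f, nφm, Set.mem_preimage, Set.mem_Ioo, Set.mem_ofPred_eq]
    simp only [ν]
    rw [measureReal_add_apply, pm_real φp ρp hφp ip p0 S hSm, pm_real φm ρm hφm im m0 S hSm, q1, q2,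
      ← integral_add ip.integrableOn im.integrableOn, ← integral_const_mul]
    congr 1
    ext ξ
    simp only [ρp, ρm]
    have hpar := parallelogram_law_with_norm ℝ (((jap ξ : ℝ) : ℂ) * v₀ ξ) (Complex.I * v₁ ξ)
    have g1 : ‖Fp v₀ v₁ ξ‖ = ‖((jap ξ : ℝ) : ℂ) * v₀ ξ - Complex.I * v₁ ξ‖ / 2 := by
      simp [Fp]
    have g2 : ‖Fm v₀ v₁ ξ‖ = ‖((jap ξ : ℝ) : ℂ) * v₀ ξ + Complex.I * v₁ ξ‖ / 2 := by
      simp [Fm]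
    have g3 : ‖((jap ξ : ℝ) : ℂ) * v₀ ξ‖ = jap ξ * ‖v₀ ξ‖ := by
      rw [norm_mul, Complex.norm_real, Real.norm_of_nonneg (jap_pos ξ).le]
    have g4 : ‖Complex.I * v₁ ξ‖ = ‖v₁ ξ‖ := by simp
    rw [g3, g4] at hpar
    rw [g1, g2, ← jap_sq]
    linear_combination (c / 2) * hpar
  rw [← k2]
  simpa only [k1] using key

theorem core_filter {d : ℕ} (hd : 1 ≤ d) (v₀ v₁ : Euc d → ℂ)
    (hH1 : MemLp (fun ξ => ((jap ξ : ℝ) : ℂ) * v₀ ξ) 2 (volume : Measure (Euc d)))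
    (hv₁L2 : MemLp v₁ 2 (volume : Measure (Euc d)))
    (wfun dtw : ℝ → Euc d → ℂ) (djw : ℝ → Fin d → Euc d → ℂ)
    (hwfun : ∀ t : ℝ, MemLp (wfun t) 2 (volume : Measure (Euc d)) ∧
      IsFourierTransformOf (wfun t) (vW v₀ v₁ t))
    (hdtw : ∀ t : ℝ, MemLp (dtw t) 2 (volume : Measure (Euc d)) ∧
      IsFourierTransformOf (dtw t) (vDt v₀ v₁ t))
    (hdjw : ∀ t : ℝ, ∀ j : Fin d, MemLp (djw t j) 2 (volume : Measure (Euc d)) ∧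
      IsFourierTransformOf (djw t j)
        (fun ξ => Complex.I * ((ξ j : ℝ) : ℂ) * vW v₀ v₁ t ξ))
    (l : Filter ℝ) [l.IsCountablyGenerated] (hl : Tendsto (fun t : ℝ => t⁻¹) l (𝓝 0))
    (hl0 : ∀ᶠ t in l, t ≠ 0) (r₀ r₁ : ℝ≥0∞) :
    Tendsto (fun t : ℝ => localEnergy wfun dtw djw r₀ r₁ t) l
      (𝓝 ((((2 * Real.pi) ^ d : ℝ))⁻¹ *
        ∫ ξ in {ξ : Euc d | r₀ < ENNReal.ofReal (‖ξ‖ / jap ξ) ∧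
            ENNReal.ofReal (‖ξ‖ / jap ξ) < r₁},
          ((1 + ‖ξ‖ ^ 2) * ‖v₀ ξ‖ ^ 2 + ‖v₁ ξ‖ ^ 2))) := by
  refine tendsto_of_seq_tendsto fun s hs => ?_
  exact core hd v₀ v₁ hH1 hv₁L2 wfun dtw djw hwfun hdtw hdjw r₀ r₁ s (hl.comp hs)
    (hs.eventually hl0)

theorem cone_filter {d : ℕ} (hd : 1 ≤ d) (v₀ v₁ : Euc d → ℂ)
    (hH1 : MemLp (fun ξ => ((jap ξ : ℝ) : ℂ) * v₀ ξ) 2 (volume : Measure (Euc d)))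
    (hv₁L2 : MemLp v₁ 2 (volume : Measure (Euc d)))
    (wfun dtw : ℝ → Euc d → ℂ) (djw : ℝ → Fin d → Euc d → ℂ)
    (hwfun : ∀ t : ℝ, MemLp (wfun t) 2 (volume : Measure (Euc d)) ∧
      IsFourierTransformOf (wfun t) (vW v₀ v₁ t))
    (hdtw : ∀ t : ℝ, MemLp (dtw t) 2 (volume : Measure (Euc d)) ∧
      IsFourierTransformOf (dtw t) (vDt v₀ v₁ t))
    (hdjw : ∀ t : ℝ, ∀ j : Fin d, MemLp (djw t j) 2 (volume : Measure (Euc d)) ∧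
      IsFourierTransformOf (djw t j)
        (fun ξ => Complex.I * ((ξ j : ℝ) : ℂ) * vW v₀ v₁ t ξ))
    (l : Filter ℝ) [l.IsCountablyGenerated] (hl : Tendsto (fun t : ℝ => t⁻¹) l (𝓝 0))
    (hl0 : ∀ᶠ t in l, t ≠ 0) :
    Tendsto (fun t : ℝ =>
        ∫ x in {x : Euc d | |t| < ‖x‖},
          (‖dtw t x‖ ^ 2 + (∑ j : Fin d, ‖djw t j x‖ ^ 2) + ‖wfun t x‖ ^ 2)) l
      (𝓝 0) := by
  have h := core_filter hd v₀ v₁ hH1 hv₁L2 wfun dtw djw hwfun hdtw hdjw l hl hl0 1 ⊤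
  have he : {ξ : Euc d | 1 < ENNReal.ofReal (‖ξ‖ / jap ξ) ∧
            ENNReal.ofReal (‖ξ‖ / jap ξ) < ⊤} = ∅ := by
    refine Set.eq_empty_of_forall_notMem fun ξ hξ => ?_
    have h1 := ENNReal.one_lt_ofReal.1 hξ.1
    rw [one_lt_div (jap_pos ξ)] at h1
    exact absurd h1 (norm_lt_jap ξ).le.not_gt
  rw [he, Measure.restrict_empty, integral_zero_measure, mul_zero] at h
  refine h.congr' ?_
  filter_upwards [hl0] with t ht
  have hset : {x : Euc d | 1 < ENNReal.ofReal (‖x‖ / |t|) ∧ ENNReal.ofReal (‖x‖ / |t|) < ⊤}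
      = {x : Euc d | |t| < ‖x‖} := by
    ext x
    constructor
    · intro hx
      exact (one_lt_div (abs_pos.2 ht)).1 (ENNReal.one_lt_ofReal.1 hx.1)
    · intro hx
      exact ⟨ENNReal.one_lt_ofReal.2 ((one_lt_div (abs_pos.2 ht)).2 hx), ENNReal.ofReal_lt_top⟩
  unfold localEnergy
  rw [hset]

/-- classical partition of energy for Klein–Gordon, eq. (1.15):
for real data `w₀ ∈ H¹`, `w₁ ∈ L²` and all `0 ≤ r₀ ≤ r₁ ≤ ∞`, the energy of the solution in
the annulus `{r₀ < |x|/|t| < r₁}` converges, as `t → ±∞`, to the frequency-localized energy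
`(2π)^{-d} ∫_{r₀ < |ξ|/⟨ξ⟩ < r₁} (⟨ξ⟩²|ŵ₀|² + |ŵ₁|²) dξ`.  In particular the energy outside
the light cone `{|x| > |t|}` tends to zero. -/
theorem statement18
    (d : ℕ) (hd : 1 ≤ d)
    (w₀ w₁ : Euc d → ℝ) (v₀ v₁ : Euc d → ℂ)
    (hw₀L2 : MemLp (fun x => ((w₀ x : ℝ) : ℂ)) 2 (volume : Measure (Euc d)))
    (hw₁L2 : MemLp (fun x => ((w₁ x : ℝ) : ℂ)) 2 (volume : Measure (Euc d)))
    (hv₀ : IsFourierTransformOf (fun x => ((w₀ x : ℝ) : ℂ)) v₀)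
    (hv₁ : IsFourierTransformOf (fun x => ((w₁ x : ℝ) : ℂ)) v₁)
    (hH1 : MemLp (fun ξ => ((jap ξ : ℝ) : ℂ) * v₀ ξ) 2 (volume : Measure (Euc d)))
    (hv₁L2 : MemLp v₁ 2 (volume : Measure (Euc d)))
    -- the solution `w`, its time derivative and its space derivatives, described by
    -- `L²` representatives together with their Fourier transforms
    (wfun dtw : ℝ → Euc d → ℂ) (djw : ℝ → Fin d → Euc d → ℂ)
    (hwfun : ∀ t : ℝ, MemLp (wfun t) 2 (volume : Measure (Euc d)) ∧
      IsFourierTransformOf (wfun t) (vW v₀ v₁ t))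
    (hdtw : ∀ t : ℝ, MemLp (dtw t) 2 (volume : Measure (Euc d)) ∧
      IsFourierTransformOf (dtw t) (vDt v₀ v₁ t))
    (hdjw : ∀ t : ℝ, ∀ j : Fin d, MemLp (djw t j) 2 (volume : Measure (Euc d)) ∧
      IsFourierTransformOf (djw t j)
        (fun ξ => Complex.I * ((ξ j : ℝ) : ℂ) * vW v₀ v₁ t ξ))
    (r₀ r₁ : ℝ≥0∞) (hr : r₀ ≤ r₁) :
    (Tendsto (fun t : ℝ => localEnergy wfun dtw djw r₀ r₁ t) atTop
      (𝓝 ((((2 * Real.pi) ^ d : ℝ))⁻¹ *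
        ∫ ξ in {ξ : Euc d | r₀ < ENNReal.ofReal (‖ξ‖ / jap ξ) ∧
            ENNReal.ofReal (‖ξ‖ / jap ξ) < r₁},
          ((1 + ‖ξ‖ ^ 2) * ‖v₀ ξ‖ ^ 2 + ‖v₁ ξ‖ ^ 2))) ∧
     Tendsto (fun t : ℝ => localEnergy wfun dtw djw r₀ r₁ t) atBot
      (𝓝 ((((2 * Real.pi) ^ d : ℝ))⁻¹ *
        ∫ ξ in {ξ : Euc d | r₀ < ENNReal.ofReal (‖ξ‖ / jap ξ) ∧
            ENNReal.ofReal (‖ξ‖ / jap ξ) < r₁},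
          ((1 + ‖ξ‖ ^ 2) * ‖v₀ ξ‖ ^ 2 + ‖v₁ ξ‖ ^ 2)))) ∧
    (Tendsto (fun t : ℝ =>
        ∫ x in {x : Euc d | |t| < ‖x‖},
          (‖dtw t x‖ ^ 2 + (∑ j : Fin d, ‖djw t j x‖ ^ 2) + ‖wfun t x‖ ^ 2)) atTop
      (𝓝 0) ∧
     Tendsto (fun t : ℝ =>
        ∫ x in {x : Euc d | |t| < ‖x‖},
          (‖dtw t x‖ ^ 2 + (∑ j : Fin d, ‖djw t j x‖ ^ 2) + ‖wfun t x‖ ^ 2)) atBot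
      (𝓝 0)) := by
  exact ⟨⟨core_filter hd v₀ v₁ hH1 hv₁L2 wfun dtw djw hwfun hdtw hdjw atTop
      tendsto_inv_atTop_zero (eventually_ne_atTop 0) r₀ r₁,
    core_filter hd v₀ v₁ hH1 hv₁L2 wfun dtw djw hwfun hdtw hdjw atBot
      tendsto_inv_atBot_zero (eventually_ne_atBot 0) r₀ r₁⟩,
    cone_filter hd v₀ v₁ hH1 hv₁L2 wfun dtw djw hwfun hdtw hdjw atTop
      tendsto_inv_atTop_zero (eventually_ne_atTop 0),
    cone_filter hd v₀ v₁ hH1 hv₁L2 wfun dtw djw hwfun hdtw hdjw atBot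
      tendsto_inv_atBot_zero (eventually_ne_atBot 0)⟩
end
end

section
/- Let d ≥ 1 and let P : ℝ^d∖{0} → ℝ be smooth. Assume that the pushforward ν of the Lebesgue measure on ℝ^d under the gradient map ξ ↦ ∇P(ξ) is absolutely continuous with respect to the Lebesgue measure on ℝ^d. Let E ⊆ ℝ^d be a measurable set whose topological boundary ∂E has Lebesgue measure zero. Then for every u₀ ∈ L²(ℝ^d), ‖1_E(·/t) · u(t) − M_E u(t)‖_{L²(ℝ^d)} → 0 as t → +∞ and as t → −∞, where u(t) = e^{itP(D_x)}u₀, the first term is the pointwise multiplication x ↦ 1_E(x/t) u(t,x), and M_E is the bounded operator on L²(ℝ^d) acting on the Fourier side as multiplication by ξ ↦ 1_E(−∇P(ξ)). -/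
open MeasureTheory Filter Topology
open scoped RealInnerProductSpace ENNReal Classical

noncomputable section

open FourierTransform in
theorem FT_eq_fourier {d : ℕ} (g : SchwartzMap (Euc d) ℂ) (y : Euc d) :
    FT (⇑g) ((2 * Real.pi) • y) = (𝓕 g) y := by
  rw [SchwartzMap.fourier_coe, Real.fourier_eq']
  unfold FT
  congr 1
  ext x
  rw [inner_smul_right]
  simp only [smul_eq_mul]
  congr 2
  push_cast
  ring

theorem rescale_memLp {d : ℕ} {u : Euc d → ℂ} (hu : MemLp u 2 volume) :
    MemLp (fun y : Euc d => u ((2 * Real.pi) • y)) 2 volume := by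
  have h2 : (2 * Real.pi) ≠ 0 := by positivity
  have hm : Measurable (fun y : Euc d => (2 * Real.pi) • y) := by fun_prop
  have : MemLp u 2 (Measure.map (fun y : Euc d => (2 * Real.pi) • y) volume) := by
    rw [Measure.map_addHaar_smul _ h2]
    exact hu.smul_measure (by simp)
  exact (memLp_map_measure_iff this.1 hm.aemeasurable).1 this

open FourierTransform in
theorem toLp_fourier_of_isFT {d : ℕ} {u v : Euc d → ℂ} (hu : MemLp u 2 volume)
    (hv : MemLp v 2 volume) (h : IsFourierTransformOf u v) :
    hv.toLp v = (((2 * Real.pi) ^ d : ℝ) : ℂ) • 𝓕 ((rescale_memLp hu).toLp _) := by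
  have hinj := LinearMap.ker_eq_bot.1
    (MeasureTheory.Lp.ker_toTemperedDistributionCLM_eq_bot (F := ℂ) (p := 2)
      (μ := (volume : Measure (Euc d))))
  rw [← FourierTransform.fourier_smul]
  apply hinj
  simp only [ContinuousLinearMap.coe_coe, Lp.toTemperedDistributionCLM_apply]
  rw [← Lp.fourier_toTemperedDistribution_eq]
  ext g
  rw [TemperedDistribution.fourier_apply, Lp.toTemperedDistribution_apply,
    Lp.toTemperedDistribution_apply]
  have e1 : ∫ x, g x • (hv.toLp v) x = ∫ x, v x * g x := by
    apply integral_congr_ae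
    filter_upwards [hv.coeFn_toLp] with x hx
    rw [hx, smul_eq_mul, mul_comm]
  rw [e1, h g]
  have e2 : ∫ x, (𝓕 g) x • ((((2 * Real.pi) ^ d : ℝ) : ℂ) • (rescale_memLp hu).toLp _ : Lp ℂ 2 (volume : Measure (Euc d))) x
      = ∫ x : Euc d, (((2 * Real.pi) ^ d : ℝ) : ℂ) *
        (fun z => u z * FT (⇑g) z) ((2 * Real.pi) • x) := by
    apply integral_congr_ae
    filter_upwards [(rescale_memLp hu).coeFn_toLp, Lp.coeFn_smul (((2 * Real.pi) ^ d : ℝ) : ℂ) ((rescale_memLp hu).toLp _)] with x hx hx2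
    rw [hx2, Pi.smul_apply, hx, smul_eq_mul, smul_eq_mul]
    simp only [FT_eq_fourier]
    ring
  rw [e2, integral_const_mul, Measure.integral_comp_smul volume (fun z => u z * FT (⇑g) z)]
  have h2 : (0:ℝ) < 2 * Real.pi := by positivity
  rw [finrank_euclideanSpace_fin, abs_of_pos (by positivity), Complex.real_smul, ← mul_assoc,
    ← Complex.ofReal_mul, mul_inv_cancel₀ (by positivity)]
  simp

theorem parseval {d : ℕ} {u v u' v' : Euc d → ℂ} (hu : MemLp u 2 volume)
    (hv : MemLp v 2 volume) (h : IsFourierTransformOf u v) (hu' : MemLp u' 2 volume)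
    (hv' : MemLp v' 2 volume) (h' : IsFourierTransformOf u' v') :
    ∫ ξ, starRingEnd ℂ (v ξ) * v' ξ =
      (((2 * Real.pi) ^ d : ℝ) : ℂ) * ∫ x, starRingEnd ℂ (u x) * u' x := by
  have key : ∀ {f f' : Euc d → ℂ} (hf : MemLp f 2 volume) (hf' : MemLp f' 2 volume),
      inner ℂ (hf.toLp f) (hf'.toLp f') = ∫ x, starRingEnd ℂ (f x) * f' x := by
    intro f f' hf hf'
    rw [L2.inner_def]
    apply integral_congr_ae
    filter_upwards [hf.coeFn_toLp, hf'.coeFn_toLp] with x h1 h2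
    rw [h1, h2, RCLike.inner_apply, mul_comm]
  have h2 : (0:ℝ) < 2 * Real.pi := by positivity
  rw [← key hv hv', toLp_fourier_of_isFT hu hv h, toLp_fourier_of_isFT hu' hv' h',
    inner_smul_left, inner_smul_right, Lp.inner_fourier_eq, key]
  rw [Measure.integral_comp_smul volume (fun x => starRingEnd ℂ (u x) * u' x)]
  rw [finrank_euclideanSpace_fin, abs_of_pos (by positivity), Complex.real_smul,
    Complex.conj_ofReal]
  have : ((((2 * Real.pi) ^ d : ℝ) : ℂ)) ≠ 0 := by
    rw [Complex.ofReal_ne_zero]; positivity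
  rw [Complex.ofReal_inv]
  field_simp

theorem isFT_modulate {d : ℕ} {u v : Euc d → ℂ} (h : IsFourierTransformOf u v) (b : Euc d) :
    IsFourierTransformOf (fun x => Complex.exp (Complex.I * ((⟪x, b⟫ : ℝ) : ℂ)) * u x)
      (fun ξ => v (ξ - b)) := by
  intro g
  have hg := h (SchwartzMap.compSubConstCLM ℂ (-b) g)
  simp only [SchwartzMap.compSubConstCLM_apply, sub_neg_eq_add] at hg
  have e1 : ∫ ξ, v (ξ - b) * g ξ = ∫ ξ, v ξ * g (ξ + b) := by
    rw [← integral_add_right_eq_self (fun ξ => v (ξ - b) * g ξ) b]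
    simp
  rw [e1, hg]
  congr 1
  ext x
  have : FT (⇑(SchwartzMap.compSubConstCLM ℂ (-b) g)) x
      = Complex.exp (Complex.I * ((⟪x, b⟫ : ℝ) : ℂ)) * FT (⇑g) x := by
    unfold FT
    rw [← integral_const_mul]
    rw [← integral_add_right_eq_self (fun y => Complex.exp (Complex.I * ((⟪x, b⟫ : ℝ) : ℂ)) *
      (Complex.exp (-(Complex.I * ((⟪y, x⟫ : ℝ) : ℂ))) * g y)) b]
    congr 1
    ext y
    rw [← mul_assoc, ← Complex.exp_add]
    simp only [SchwartzMap.compSubConstCLM_apply, sub_neg_eq_add]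
    congr 2
    rw [inner_add_left, real_inner_comm x b]
    push_cast
    ring
  rw [this]
  ring

theorem translate_tendsto {d : ℕ} {F : Euc d → ℂ} (hF : MemLp F 2 volume) {ι : Type*} {l : Filter ι}
    {b : ι → Euc d} (hb : Tendsto b l (𝓝 0)) :
    Tendsto (fun i => eLpNorm (fun ξ => F (ξ - b i) - F ξ) 2 volume) l (𝓝 0) := by
  let T : Euc d → C(Euc d, Euc d) :=
    (ContinuousMap.mk (fun a : Euc d × Euc d => a.2 - a.1) (by fun_prop)).curry
  have hT : Continuous T := ContinuousMap.continuous _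
  have hm : ∀ a, MeasurePreserving (T a) (volume : Measure (Euc d)) volume :=
    fun a => measurePreserving_sub_right volume a
  have hm0 : ∀ a, MeasurePreserving (T a) (volume : Measure (Euc d)) volume :=
    fun a => measurePreserving_sub_right volume a
  have h1 := (tendsto_const_nhds (x := hF.toLp F) (f := l)).compMeasurePreservingLp
    ((hT.tendsto 0).comp hb) (fun i => hm (b i)) (hm 0) (by simp)
  have h0 : Lp.compMeasurePreserving (T 0) (hm 0) (hF.toLp F) = hF.toLp F := by
    apply Lp.ext
    filter_upwards [Lp.coeFn_compMeasurePreserving (hF.toLp F) (hm 0)] with x hx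
    rw [hx]
    simp [T]
  rw [h0, Lp.tendsto_Lp_iff_tendsto_eLpNorm'] at h1
  refine h1.congr fun i => eLpNorm_congr_ae ?_
  have := (hm (b i)).quasiMeasurePreserving.ae_eq_comp hF.coeFn_toLp
  filter_upwards [Lp.coeFn_compMeasurePreserving (hF.toLp F) (hm (b i)), this, hF.coeFn_toLp]
    with x h2 h3 h4
  simp only [Function.comp] at h2 h3 ⊢
  rw [Pi.sub_apply, h2, h4]
  rw [h3]
  simp [T]

theorem norm_expI (r : ℝ) : ‖Complex.exp (Complex.I * (r : ℂ))‖ = 1 := by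
  rw [mul_comm]; exact Complex.norm_exp_ofReal_mul_I r

theorem memLp_unimod {d : ℕ} {F : Euc d → ℂ} (hF : MemLp F 2 volume) {p : Euc d → ℝ}
    (hp : AEMeasurable p volume) :
    MemLp (fun ξ => Complex.exp (Complex.I * ((p ξ : ℝ) : ℂ)) * F ξ) 2 volume := by
  have h1 : AEStronglyMeasurable (fun ξ => Complex.exp (Complex.I * ((p ξ : ℝ) : ℂ))) volume := by
    apply AEMeasurable.aestronglyMeasurable
    fun_prop
  refine hF.of_le (h1.mul hF.1) (ae_of_all _ fun ξ => ?_)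
  rw [norm_mul, norm_expI, one_mul]

theorem conj_memLp {d : ℕ} {F : Euc d → ℂ} (hF : MemLp F 2 volume) :
    MemLp (fun ξ => starRingEnd ℂ (F ξ)) 2 volume := by
  refine hF.of_le (Complex.continuous_conj.comp_aestronglyMeasurable hF.1)
    (ae_of_all _ fun ξ => ?_)
  rw [RCLike.norm_conj]

theorem limit_lemma {d : ℕ} {P : Euc d → ℝ} (hPm : Measurable P)
    (hPd : ∀ᵐ ξ, DifferentiableAt ℝ P ξ) {F : Euc d → ℂ} (hF : MemLp F 2 volume)
    {τ : ℕ → ℝ} (hτ : Tendsto (fun n => ‖τ n‖) atTop atTop) (a : Euc d) :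
    Tendsto (fun n => ∫ ξ, starRingEnd ℂ (Complex.exp (Complex.I * ((τ n * P ξ : ℝ) : ℂ)) * F ξ) *
        (Complex.exp (Complex.I * ((τ n * P (ξ - (τ n)⁻¹ • a) : ℝ) : ℂ)) * F (ξ - (τ n)⁻¹ • a)))
      atTop (𝓝 (∫ ξ, Complex.exp (Complex.I * ((⟪-gradient P ξ, a⟫ : ℝ) : ℂ)) *
        (starRingEnd ℂ (F ξ) * F ξ))) := by
  have hb : Tendsto (fun n => (τ n)⁻¹ • a) atTop (𝓝 0) := by
    have : Tendsto (fun n => (τ n)⁻¹) atTop (𝓝 0) := by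
      rw [tendsto_zero_iff_norm_tendsto_zero]
      simp only [norm_inv]
      exact tendsto_inv_atTop_zero.comp hτ
    simpa using this.smul_const a
  have htr : ∀ b : Euc d, MemLp (fun ξ => F (ξ - b)) 2 volume := fun b =>
    hF.comp_measurePreserving (measurePreserving_sub_right volume b)
  have hPs : ∀ b : Euc d, Measurable (fun ξ => P (ξ - b)) := fun b =>
    hPm.comp (measurable_sub_const b)
  let A : ℕ → Euc d → ℂ := fun n ξ =>
    Complex.exp (Complex.I * ((τ n * (P (ξ - (τ n)⁻¹ • a) - P ξ) : ℝ) : ℂ)) *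
      (starRingEnd ℂ (F ξ) * F ξ)
  let φ : ℕ → Euc d → ℂ := fun n ξ =>
    Complex.exp (Complex.I * ((τ n * (P (ξ - (τ n)⁻¹ • a) - P ξ) : ℝ) : ℂ)) *
      (starRingEnd ℂ (F ξ))
  let D : ℕ → Euc d → ℂ := fun n ξ => F (ξ - (τ n)⁻¹ • a) - F ξ
  have hφ : ∀ n, MemLp (φ n) 2 volume := fun n => by
    refine memLp_unimod (conj_memLp hF) (Measurable.aemeasurable ?_)
    exact ((hPs _).sub hPm).const_mul _
  have hD : ∀ n, MemLp (D n) 2 volume := fun n => (htr _).sub hF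
  have hAi : ∀ n, Integrable (A n) volume := fun n => by
    have := (hφ n).integrable_mul hF
    refine this.congr (ae_of_all _ fun ξ => ?_)
    simp only [Pi.mul_apply, A, φ]; ring
  have hBi : ∀ n, Integrable (fun ξ => φ n ξ * D n ξ) volume := fun n =>
    (hφ n).integrable_mul (hD n)
  have hsplit : ∀ n, ∫ ξ, starRingEnd ℂ (Complex.exp (Complex.I * ((τ n * P ξ : ℝ) : ℂ)) * F ξ) *
        (Complex.exp (Complex.I * ((τ n * P (ξ - (τ n)⁻¹ • a) : ℝ) : ℂ)) * F (ξ - (τ n)⁻¹ • a))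
      = (∫ ξ, A n ξ) + ∫ ξ, φ n ξ * D n ξ := by
    intro n
    rw [← integral_add (hAi n) (hBi n)]
    congr 1
    ext ξ
    simp only [A, φ, D]
    rw [map_mul, ← Complex.exp_conj, map_mul, Complex.conj_I, Complex.conj_ofReal]
    have : Complex.exp (Complex.I * ((τ n * (P (ξ - (τ n)⁻¹ • a) - P ξ) : ℝ) : ℂ)) =
        Complex.exp (-Complex.I * ((τ n * P ξ : ℝ) : ℂ)) *
        Complex.exp (Complex.I * ((τ n * P (ξ - (τ n)⁻¹ • a) : ℝ) : ℂ)) := by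
      rw [← Complex.exp_add]
      congr 1
      push_cast
      ring
    rw [this]
    ring
  simp_rw [hsplit]
  rw [← add_zero (∫ ξ, Complex.exp (Complex.I * ((⟪-gradient P ξ, a⟫ : ℝ) : ℂ)) *
        (starRingEnd ℂ (F ξ) * F ξ))]
  apply Tendsto.add
  · refine tendsto_integral_of_dominated_convergence (fun ξ => ‖starRingEnd ℂ (F ξ) * F ξ‖)
      (fun n => (hAi n).1) ?_ ?_ ?_
    · exact ((conj_memLp hF).integrable_mul hF).norm
    · intro n
      refine ae_of_all _ fun ξ => ?_
      simp only [A]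
      rw [norm_mul, norm_expI, one_mul]
    · filter_upwards [hPd] with ξ hξ
      have h1 := hξ.hasFDerivAt.lim (-a) hτ
      have h2 : fderiv ℝ P ξ (-a) = ⟪-gradient P ξ, a⟫ := by
        rw [gradient, inner_neg_left, InnerProductSpace.toDual_symm_apply, map_neg]
      rw [h2] at h1
      refine Tendsto.mul_const _ ?_
      refine (Complex.continuous_exp.tendsto _).comp ?_
      refine Tendsto.const_mul _ ?_
      refine (Complex.continuous_ofReal.tendsto _).comp ?_
      refine h1.congr fun n => ?_
      rw [smul_neg, ← sub_eq_add_neg, smul_eq_mul]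
  · have hD0 := translate_tendsto hF hb
    rw [tendsto_zero_iff_enorm_tendsto_zero]
    have hup : Tendsto (fun n => eLpNorm F 2 volume * eLpNorm (D n) 2 volume) atTop (𝓝 0) := by
      have := ENNReal.Tendsto.const_mul hD0 (Or.inr hF.2.ne)
      simpa using this
    refine tendsto_of_tendsto_of_tendsto_of_le_of_le tendsto_const_nhds hup
      (fun n => zero_le) (fun n => ?_)
    calc ‖∫ ξ, φ n ξ * D n ξ‖ₑ ≤ ∫⁻ ξ, ‖φ n ξ * D n ξ‖ₑ := enorm_integral_le_lintegral_enorm _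
      _ = eLpNorm (φ n • D n) 1 volume := by rw [eLpNorm_one_eq_lintegral_enorm]; rfl
      _ ≤ eLpNorm (φ n) 2 volume * eLpNorm (D n) 2 volume :=
        eLpNorm_smul_le_mul_eLpNorm (hD n).1 (hφ n).1
      _ = _ := by
        congr 1
        apply eLpNorm_congr_norm_ae
        refine ae_of_all _ fun ξ => ?_
        simp only [φ]
        rw [norm_mul, norm_expI, one_mul, RCLike.norm_conj]

def mass {d : ℕ} (f : Euc d → ℂ) : ℝ≥0∞ := ∫⁻ x, ‖f x‖ₑ ^ 2

theorem eLpNorm_eq_mass {d : ℕ} (f : Euc d → ℂ) : eLpNorm f 2 volume = mass f ^ (1 / 2 : ℝ) := by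
  rw [eLpNorm_eq_lintegral_rpow_enorm_toReal (by simp) (by simp)]
  simp [mass]

theorem mass_ne_top {d : ℕ} {f : Euc d → ℂ} (hf : MemLp f 2 volume) : mass f ≠ ⊤ := by
  intro h
  have := hf.2
  rw [eLpNorm_eq_mass, h] at this
  simp at this

theorem ofReal_mass {d : ℕ} {f : Euc d → ℂ} (hf : MemLp f 2 volume) :
    ((mass f).toReal : ℂ) = ∫ x, starRingEnd ℂ (f x) * f x := by
  have : ∀ x, starRingEnd ℂ (f x) * f x = ((‖f x‖ ^ 2 : ℝ) : ℂ) := fun x => by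
    rw [mul_comm, Complex.mul_conj, Complex.normSq_eq_norm_sq]
  have hms : AEStronglyMeasurable (fun x => ‖f x‖ ^ 2) volume := hf.1.norm.pow 2
  simp_rw [this]
  rw [integral_complex_ofReal, integral_eq_lintegral_of_nonneg_ae (ae_of_all _ fun x => by positivity)
    hms]
  congr 3
  unfold mass
  congr 1
  ext x
  rw [ENNReal.ofReal_pow (norm_nonneg _), ofReal_norm]

def densMeas {d : ℕ} (f : Euc d → ℂ) (φ : Euc d → Euc d) : Measure (Euc d) :=
  (volume.withDensity (fun x => ‖f x‖ₑ ^ 2 * (mass f)⁻¹)).map φ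

theorem densMeas_prob {d : ℕ} {f : Euc d → ℂ} (hf : MemLp f 2 volume) (h0 : mass f ≠ 0)
    {φ : Euc d → Euc d} (hφ : Measurable φ) : IsProbabilityMeasure (densMeas f φ) := by
  constructor
  rw [densMeas, Measure.map_apply hφ MeasurableSet.univ, Set.preimage_univ,
    withDensity_apply _ MeasurableSet.univ, Measure.restrict_univ,
    lintegral_mul_const' _ _ (ENNReal.inv_ne_top.2 h0)]
  exact ENNReal.mul_inv_cancel h0 (mass_ne_top hf)

theorem densMeas_apply {d : ℕ} {f : Euc d → ℂ} (h0 : mass f ≠ 0)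
    {φ : Euc d → Euc d} (hφ : Measurable φ) {A : Set (Euc d)} (hA : MeasurableSet A) :
    densMeas f φ A = mass (fun x => (if φ x ∈ A then (1:ℂ) else 0) * f x) * (mass f)⁻¹ := by
  rw [densMeas, Measure.map_apply hφ hA, withDensity_apply _ (hφ hA),
    lintegral_mul_const' _ _ (ENNReal.inv_ne_top.2 h0)]
  congr 1
  rw [← lintegral_indicator (hφ hA), mass]
  congr 1
  ext x
  by_cases hx : φ x ∈ A
  · rw [Set.indicator_of_mem (show x ∈ φ ⁻¹' A from hx)]; simp [hx]
  · rw [Set.indicator_of_notMem (show x ∉ φ ⁻¹' A from hx)]; simp [hx]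

theorem densMeas_charFun {d : ℕ} {f : Euc d → ℂ} (hf : MemLp f 2 volume) (h0 : mass f ≠ 0)
    {φ : Euc d → Euc d} (hφ : Measurable φ) (a : Euc d) :
    charFun (densMeas f φ) a = ((mass f).toReal : ℂ)⁻¹ *
      ∫ x, Complex.exp (Complex.I * ((⟪φ x, a⟫ : ℝ) : ℂ)) * (starRingEnd ℂ (f x) * f x) := by
  rw [charFun_apply, densMeas, integral_map hφ.aemeasurable
    (by apply Continuous.aestronglyMeasurable; fun_prop),
    integral_withDensity_eq_integral_toReal_smul₀]
  · rw [← integral_const_mul]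
    congr 1
    ext x
    rw [mul_comm (starRingEnd ℂ (f x)), Complex.mul_conj, Complex.normSq_eq_norm_sq,
      ENNReal.toReal_mul, Complex.real_smul, ENNReal.toReal_inv, ENNReal.toReal_pow,
      toReal_enorm, mul_comm Complex.I]
    push_cast
    ring
  · exact (hf.1.enorm.pow_const 2).mul_const _
  · exact ae_of_all _ fun x => ENNReal.mul_lt_top (by finiteness)
      (ENNReal.inv_ne_top.2 h0).lt_top

theorem core_s19 {d : ℕ} {P : Euc d → ℝ} (hPm : Measurable P)
    (hPd : ∀ᵐ ξ, DifferentiableAt ℝ P ξ) {F : Euc d → ℂ} (hF : MemLp F 2 volume)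
    (hG : Measurable (fun ξ => gradient P ξ))
    (hac : Measure.map (fun ξ : Euc d => gradient P ξ) (volume : Measure (Euc d)) ≪
      (volume : Measure (Euc d)))
    {A : Set (Euc d)} (hA : MeasurableSet A)
    (hfr : (volume : Measure (Euc d)) (frontier A) = 0)
    (hFA : ∀ ξ, -gradient P ξ ∈ A → F ξ = 0)
    {τ : ℕ → ℝ} (hτ : Tendsto (fun n => ‖τ n‖) atTop atTop)
    {w : ℕ → Euc d → ℂ} (hw : ∀ n, MemLp (w n) 2 volume)
    (hwF : ∀ n, IsFourierTransformOf (w n)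
      (fun ξ => Complex.exp (Complex.I * ((τ n * P ξ : ℝ) : ℂ)) * F ξ)) :
    Tendsto (fun n => eLpNorm (fun x : Euc d =>
      (if (τ n)⁻¹ • x ∈ A then (1:ℂ) else 0) * w n x) 2 volume) atTop (𝓝 0) := by
  have hv : ∀ n, MemLp (fun ξ => Complex.exp (Complex.I * ((τ n * P ξ : ℝ) : ℂ)) * F ξ) 2 volume :=
    fun n => memLp_unimod hF (hPm.const_mul _).aemeasurable
  have hGn : Measurable (fun ξ => -gradient P ξ) := hG.neg
  have hc : (0:ℝ) < (2 * Real.pi) ^ d := by positivity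
  have hmass : ∀ n, (mass F).toReal = (2 * Real.pi) ^ d * (mass (w n)).toReal := by
    intro n
    have h1 := parseval (hw n) (hv n) (hwF n) (hw n) (hv n) (hwF n)
    rw [← ofReal_mass (hw n), ← ofReal_mass (hv n)] at h1
    have h2 : mass (fun ξ => Complex.exp (Complex.I * ((τ n * P ξ : ℝ) : ℂ)) * F ξ) = mass F := by
      unfold mass
      congr 1
      ext ξ
      rw [enorm_mul, ← ofReal_norm, norm_expI]
      simp
    rw [h2] at h1
    exact_mod_cast h1
  by_cases h0 : mass F = 0
  · have hz : ∀ n, mass (w n) = 0 := fun n => by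
      have := hmass n
      rw [h0, ENNReal.toReal_zero] at this
      have h3 : (mass (w n)).toReal = 0 := by
        rcases mul_eq_zero.1 this.symm with h | h
        · exact absurd h hc.ne'
        · exact h
      exact ((ENNReal.toReal_eq_zero_iff _).1 h3).resolve_right (mass_ne_top (hw n))
    refine tendsto_of_tendsto_of_tendsto_of_le_of_le tendsto_const_nhds
      (tendsto_const_nhds (x := 0)) (fun n => zero_le) (fun n => ?_)
    calc _ ≤ eLpNorm (w n) 2 volume := by
          apply eLpNorm_mono
          intro x
          split_ifs <;> simp
      _ = 0 := by rw [eLpNorm_eq_mass, hz]; simp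
      _ ≤ 0 := le_rfl
  have hF0 : (mass F).toReal ≠ 0 := ENNReal.toReal_ne_zero.2 ⟨h0, mass_ne_top hF⟩
  have hw0 : ∀ n, mass (w n) ≠ 0 := fun n h => by
    have := hmass n
    rw [h] at this
    simp at this
    exact hF0 (by simpa using this)
  have hφ : ∀ n, Measurable (fun x : Euc d => (τ n)⁻¹ • x) := fun n => by fun_prop
  let μ : ℕ → ProbabilityMeasure (Euc d) := fun n =>
    ⟨densMeas (w n) (fun x => (τ n)⁻¹ • x), densMeas_prob (hw n) (hw0 n) (hφ n)⟩
  let μ₀ : ProbabilityMeasure (Euc d) :=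
    ⟨densMeas F (fun ξ => -gradient P ξ), densMeas_prob hF h0 hGn⟩
  have hlim : Tendsto μ atTop (𝓝 μ₀) := by
    apply ProbabilityMeasure.tendsto_of_tendsto_charFun
    intro a
    have e0 : charFun (μ₀ : Measure (Euc d)) a = _ := densMeas_charFun hF h0 hGn a
    rw [e0]
    refine ((limit_lemma hPm hPd hF hτ a).const_mul _).congr fun n => ?_
    have e1 : charFun (μ n : Measure (Euc d)) a = _ :=
      densMeas_charFun (hw n) (hw0 n) (hφ n) a
    rw [e1]
    have hmod : MemLp (fun x => Complex.exp (Complex.I * ((⟪x, (τ n)⁻¹ • a⟫ : ℝ) : ℂ)) * w n x) 2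
        volume := memLp_unimod (hw n) (by fun_prop)
    have hvs := (hv n).comp_measurePreserving (measurePreserving_sub_right volume ((τ n)⁻¹ • a))
    have h1 := parseval (hw n) (hv n) (hwF n) hmod hvs (isFT_modulate (hwF n) _)
    simp only [Function.comp] at h1
    rw [h1, hmass n, Complex.ofReal_mul, ← mul_assoc, mul_inv]
    have : (((2 * Real.pi) ^ d : ℝ) : ℂ) ≠ 0 := Complex.ofReal_ne_zero.2 hc.ne'
    rw [mul_comm _ (((mass (w n)).toReal : ℂ)⁻¹), mul_assoc _ _ (((2 * Real.pi) ^ d : ℝ) : ℂ),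
      inv_mul_cancel₀ this, mul_one]
    congr 2
    ext x
    rw [real_inner_smul_left, real_inner_smul_right]
    ring
  have hnull : (μ₀ : Measure (Euc d)) (frontier A) = 0 := by
    have hmf : MeasurableSet (frontier A) := isClosed_frontier.measurableSet
    show densMeas F (fun ξ => -gradient P ξ) (frontier A) = 0
    rw [densMeas, Measure.map_apply hGn hmf]
    apply withDensity_absolutelyContinuous
    have h1 : (volume : Measure (Euc d)) (Neg.neg ⁻¹' frontier A) = 0 := by
      rw [Measure.measure_preimage_neg, hfr]
    have h2 := hac h1
    rwa [Measure.map_apply hG (measurable_neg hmf)] at h2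
  have hpm := ProbabilityMeasure.tendsto_measure_of_null_frontier_of_tendsto' hlim hnull
  have hA0 : (μ₀ : Measure (Euc d)) A = 0 := by
    show densMeas F (fun ξ => -gradient P ξ) A = 0
    rw [densMeas_apply h0 hGn hA]
    have : ∀ ξ, (if -gradient P ξ ∈ A then (1:ℂ) else 0) * F ξ = 0 := fun ξ => by
      split_ifs with h
      · rw [hFA ξ h, mul_zero]
      · simp
    simp [this, mass]
  rw [hA0] at hpm
  have hmn : ∀ n, mass (w n) = mass (w 0) := fun n => by
    rw [← ENNReal.toReal_eq_toReal_iff' (mass_ne_top (hw n)) (mass_ne_top (hw 0))]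
    have := (hmass n).symm.trans (hmass 0)
    exact mul_left_cancel₀ hc.ne' this
  have hm2 : Tendsto (fun n => mass (fun x : Euc d =>
      (if (τ n)⁻¹ • x ∈ A then (1:ℂ) else 0) * w n x)) atTop (𝓝 0) := by
    have h1 := ENNReal.Tendsto.mul_const (b := mass (w 0)) hpm (Or.inr (mass_ne_top (hw 0)))
    rw [zero_mul] at h1
    refine h1.congr fun n => ?_
    have e : (μ n : Measure (Euc d)) A = _ := densMeas_apply (hw0 n) (hφ n) hA
    rw [e, ← hmn n, mul_assoc, ENNReal.inv_mul_cancel (hw0 n) (mass_ne_top (hw n)), mul_one]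
  simp_rw [eLpNorm_eq_mass]
  have := (ENNReal.continuous_rpow_const (y := (1 / 2 : ℝ))).tendsto 0
  rw [ENNReal.zero_rpow_of_pos (by norm_num)] at this
  exact this.comp hm2

theorem isFT_sub {d : ℕ} {u v u' v' : Euc d → ℂ} (hu : MemLp u 2 volume)
    (hv : MemLp v 2 volume) (h : IsFourierTransformOf u v) (hu' : MemLp u' 2 volume)
    (hv' : MemLp v' 2 volume) (h' : IsFourierTransformOf u' v') :
    IsFourierTransformOf (fun x => u x - u' x) (fun x => v x - v' x) := by
  intro g
  have hg : MemLp (⇑g) 2 volume := g.memLp 2 volume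
  have hFg : MemLp (FT (⇑g)) 2 volume := by
    have h1 : FT (⇑g) = fun x => (FourierTransform.fourier g) ((2 * Real.pi)⁻¹ • x) := by
      ext x
      rw [← FT_eq_fourier, smul_smul, mul_inv_cancel₀ (by positivity), one_smul]
    have h2 : ((2 * Real.pi)⁻¹) ≠ 0 := by positivity
    have hm : Measurable (fun y : Euc d => (2 * Real.pi)⁻¹ • y) := by fun_prop
    have : MemLp (⇑(FourierTransform.fourier g)) 2
        (Measure.map (fun y : Euc d => (2 * Real.pi)⁻¹ • y) volume) := by
      rw [Measure.map_addHaar_smul _ h2]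
      exact ((FourierTransform.fourier g).memLp 2 volume).smul_measure (by simp)
    rw [h1]
    exact (memLp_map_measure_iff this.1 hm.aemeasurable).1 this
  have i1 : Integrable (fun x => v x * g x) volume := hv.integrable_mul hg
  have i2 : Integrable (fun x => v' x * g x) volume := hv'.integrable_mul hg
  have i3 : Integrable (fun x => u x * FT (⇑g) x) volume := hu.integrable_mul hFg
  have i4 : Integrable (fun x => u' x * FT (⇑g) x) volume := hu'.integrable_mul hFg
  simp only [sub_mul]
  rw [integral_sub i1 i2, integral_sub i3 i4, h g, h' g]

/-- Lemma D.1, `1_E ∈ 𝒢`: if the pushforward of the Lebesgue measure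
under `∇P` is absolutely continuous and `∂E` is Lebesgue-null, then for every `u₀ ∈ L²`,
`‖1_E(x/t) u(t) − 1_E(−∇P(D)) u(t)‖_{L²} → 0` as `t → ±∞`, where `u(t) = e^{itP(D)}u₀`.
The solution `u(t)` and the Fourier-multiplied solution `m(t) = M_E u(t)` are described by
`L²` representatives `ut t`, `mt t` together with their Fourier transforms. -/
theorem statement19
    (d : ℕ) (hd : 1 ≤ d)
    (P : Euc d → ℝ) (hP : ContDiffOn ℝ (⊤ : ℕ∞) P {(0 : Euc d)}ᶜ)
    (hac : Measure.map (fun ξ : Euc d => gradient P ξ) (volume : Measure (Euc d)) ≪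
      (volume : Measure (Euc d)))
    (E : Set (Euc d)) (hE : MeasurableSet E)
    (hfrontE : (volume : Measure (Euc d)) (frontier E) = 0)
    (u₀ Fu₀ : Euc d → ℂ)
    (hu₀ : MemLp u₀ 2 (volume : Measure (Euc d)))
    (hFu₀mem : MemLp Fu₀ 2 (volume : Measure (Euc d)))
    (hFu₀ : IsFourierTransformOf u₀ Fu₀)
    -- `u(t) = e^{itP(D)}u₀`
    (ut : ℝ → Euc d → ℂ)
    (hut : ∀ t : ℝ, MemLp (ut t) 2 (volume : Measure (Euc d)) ∧
      IsFourierTransformOf (ut t)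
        (fun ξ => Complex.exp (Complex.I * ((t * P ξ : ℝ) : ℂ)) * Fu₀ ξ))
    -- `m(t) = M_E u(t)`, the Fourier multiplier by `1_E(−∇P(ξ))` applied to `u(t)`
    (mt : ℝ → Euc d → ℂ)
    (hmt : ∀ t : ℝ, MemLp (mt t) 2 (volume : Measure (Euc d)) ∧
      IsFourierTransformOf (mt t)
        (fun ξ => (if -gradient P ξ ∈ E then (1:ℂ) else 0) *
          Complex.exp (Complex.I * ((t * P ξ : ℝ) : ℂ)) * Fu₀ ξ)) :
    Tendsto (fun t : ℝ =>
        eLpNorm (fun x : Euc d =>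
          (if t⁻¹ • x ∈ E then (1:ℂ) else 0) * ut t x - mt t x) 2
          (volume : Measure (Euc d))) atTop (𝓝 0) ∧
    Tendsto (fun t : ℝ =>
        eLpNorm (fun x : Euc d =>
          (if t⁻¹ • x ∈ E then (1:ℂ) else 0) * ut t x - mt t x) 2
          (volume : Measure (Euc d))) atBot (𝓝 0) := by
  have hPm : Measurable P := measurable_of_continuousOn_compl_singleton 0 hP.continuousOn
  have hG : Measurable (fun ξ => gradient P ξ) := by
    unfold gradient
    exact (InnerProductSpace.toDual ℝ (Euc d)).symm.continuous.measurable.comp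
      (measurable_fderiv ℝ P)
  have : Nonempty (Fin d) := ⟨⟨0, hd⟩⟩
  have hPd : ∀ᵐ ξ : Euc d, DifferentiableAt ℝ P ξ := by
    have h0 : ∀ᵐ ξ : Euc d, ξ ≠ 0 := by
      rw [ae_iff]; simp
    filter_upwards [h0] with ξ hξ
    exact (hP.contDiffAt (isOpen_compl_singleton.mem_nhds hξ)).differentiableAt (by simp)
  have hS : MeasurableSet {ξ : Euc d | -gradient P ξ ∈ E} := hG.neg hE
  have hF1 : MemLp (fun ξ => (if -gradient P ξ ∈ E then (1:ℂ) else 0) * Fu₀ ξ) 2 volume := by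
    refine (hFu₀mem.indicator hS).ae_eq (ae_of_all _ fun ξ => ?_)
    simp only [Set.indicator, Set.mem_ofPred_eq]
    split_ifs <;> simp
  have hF2 : MemLp (fun ξ => (if -gradient P ξ ∈ E then (0:ℂ) else 1) * Fu₀ ξ) 2 volume := by
    refine (hFu₀mem.indicator hS.compl).ae_eq (ae_of_all _ fun ξ => ?_)
    simp only [Set.indicator, Set.mem_ofPred_eq, Set.mem_compl_iff]
    split_ifs <;> simp_all
  have hgt : ∀ t, IsFourierTransformOf (fun x => ut t x - mt t x) (fun ξ =>
      Complex.exp (Complex.I * ((t * P ξ : ℝ) : ℂ)) *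
        ((if -gradient P ξ ∈ E then (0:ℂ) else 1) * Fu₀ ξ)) := by
    intro t
    have hmv : MemLp (fun ξ => (if -gradient P ξ ∈ E then (1:ℂ) else 0) *
          Complex.exp (Complex.I * ((t * P ξ : ℝ) : ℂ)) * Fu₀ ξ) 2 volume := by
      refine (memLp_unimod hF1 (hPm.const_mul t).aemeasurable).ae_eq (ae_of_all _ fun ξ => ?_)
      simp only
      ring
    have := isFT_sub (hut t).1 (memLp_unimod hFu₀mem (hPm.const_mul t).aemeasurable) (hut t).2
      (hmt t).1 hmv (hmt t).2
    convert this using 2 with ξ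
    split_ifs <;> ring
  have hmt' : ∀ t, IsFourierTransformOf (mt t) (fun ξ =>
      Complex.exp (Complex.I * ((t * P ξ : ℝ) : ℂ)) *
        ((if -gradient P ξ ∈ E then (1:ℂ) else 0) * Fu₀ ξ)) := by
    intro t
    convert (hmt t).2 using 2 with ξ
    ring
  have main : ∀ τ : ℕ → ℝ, Tendsto (fun n => ‖τ n‖) atTop atTop →
      Tendsto (fun n => eLpNorm (fun x : Euc d =>
          (if (τ n)⁻¹ • x ∈ E then (1:ℂ) else 0) * ut (τ n) x - mt (τ n) x) 2
          (volume : Measure (Euc d))) atTop (𝓝 0) := by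
    intro τ hτ
    have h1 := core_s19 hPm hPd hF2 hG hac hE hfrontE (fun ξ h => by simp [h]) hτ
      (fun n => (hut (τ n)).1.sub (hmt (τ n)).1) (fun n => hgt (τ n))
    have h2 := core_s19 hPm hPd hF1 hG hac hE.compl (by rwa [frontier_compl])
      (fun ξ h => by simp only [Set.mem_compl_iff] at h; simp [h]) hτ
      (fun n => (hmt (τ n)).1) (fun n => hmt' (τ n))
    have h3 := h1.add h2
    rw [add_zero] at h3
    refine tendsto_of_tendsto_of_tendsto_of_le_of_le tendsto_const_nhds h3
      (fun n => zero_le) (fun n => ?_)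
    have hmeas : ∀ A : Set (Euc d), MeasurableSet A → ∀ f : Euc d → ℂ, MemLp f 2 volume →
        AEStronglyMeasurable (fun x => (if (τ n)⁻¹ • x ∈ A then (1:ℂ) else 0) * f x) volume := by
      intro A hA f hf
      have hφ : Measurable (fun x : Euc d => (τ n)⁻¹ • x) := by fun_prop
      exact (Measurable.ite (hφ hA) measurable_const measurable_const).aestronglyMeasurable.mul hf.1
    refine le_trans (le_of_eq ?_) (eLpNorm_sub_le
      (hmeas E hE _ ((hut (τ n)).1.sub (hmt (τ n)).1)) (hmeas Eᶜ hE.compl _ (hmt (τ n)).1)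
      (by norm_num))
    congr 1
    ext x
    simp only [Pi.sub_apply, Set.mem_compl_iff]
    split_ifs <;> ring
  constructor
  · exact tendsto_of_seq_tendsto fun τ hτ => main τ (tendsto_abs_atTop_atTop.comp hτ)
  · exact tendsto_of_seq_tendsto fun τ hτ => main τ (tendsto_abs_atBot_atTop.comp hτ)
end
end
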